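/- arXiv:2412.01686 — 2 statements merged into one kernel-verified Lean document; each statement's English description precedes it below -/
import Mathlib

section
/- Theorem 1 (direct linearisation of the non-commutative KP equation). Let p be a scattering function satisfying the linearised KP constraints ∂_y p = ∂_z²p − ∂_ζ²p and ∂_t p = 4(∂_z³p + ∂_ζ³p). Suppose g = g(z,ζ;x,y,t) is a smooth ℂ^{m×m}-valued function, with all partial derivatives bounded, absolutely integrable over (-∞,0] in z and in ζ, and tending to 0 as z → −∞ or ζ → −∞, which solves the Gelfand–Levitan–Marchenko equation and its mirror version for all z, ζ ∈ (-∞,0] and x, y, t ∈ ℝ: p(z+x, ζ+x; y,t) = g(z,ζ;x,y,t) − ∫_{-∞}^0 g(z,ξ;x,y,t)·p(ξ+x, ζ+x; y,t) dξ, and p(z+x, ζ+x; y,t) = g(z,ζ;x,y,t) − ∫_{-∞}^0 p(z+x, ξ+x; y,t)·g(ξ,ζ;x,y,t) dξ. Assume also that u(x,y,t) := g(0,0;x,y,t) and all its partial derivatives tend to 0 as x → −∞ and are absolutely integrable in x over half-lines. Then u satisfies the non-commutative potential Kadomtsev–Petviashvili equation: for all x, y, t ∈ ℝ, ∫_{-∞}^x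 ∂_y²u(x̃,y,t) dx̃ = (1/3)(∂_t u − ∂_x³ u)(x,y,t) + 2(∂_x u(x,y,t))² + 2∫_{-∞}^x ((∂_y u)(∂_x u) − (∂_x u)(∂_y u))(x̃,y,t) dx̃, i.e. D u_y = (1/3)(u_t − u_{xxx}) + 2u_x² + 2∂_x^{-1}[u_y, u_x] with D = ∂_x^{-1}∂_y. -/
open MeasureTheory Filter

namespace NCKP

/-- `m × m` complex matrices. -/
abbrev Mat (m : ℕ) := Matrix (Fin m) (Fin m) ℂ

/-- Matrix-valued kernels on `ℝ²`. -/
abbrev Ker (m : ℕ) := ℝ → ℝ → Mat m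

/-- Kernel product `(k₁∗k₂)(z,ζ) := ∫_{-∞}^0 k₁(z,ξ)·k₂(ξ,ζ) dξ`, entrywise Bochner integral. -/
noncomputable def conv {m : ℕ} (k₁ k₂ : Ker m) : Ker m :=
  fun z ζ => Matrix.of fun i j => ∫ ξ in Set.Iic (0:ℝ), (k₁ z ξ * k₂ ξ ζ) i j

/-- `∂_z^a ∂_ζ^b` of a kernel, entrywise. -/
noncomputable def pder {m : ℕ} (a b : ℕ) (p : Ker m) : Ker m :=
  fun z ζ => Matrix.of fun i j =>
    iteratedDeriv a (fun z' => iteratedDeriv b (fun ζ' => p z' ζ' i j) ζ) z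

/-- `p^x_{a,b}(z,ζ) := (∂_z^a ∂_ζ^b p)(z+x, ζ+x)`. -/
noncomputable def pSh {m : ℕ} (p : Ker m) (x : ℝ) (a b : ℕ) : Ker m :=
  fun z ζ => pder a b p (z + x) (ζ + x)

/-- `P̂₁ := p^x_{1,0} + p^x_{0,1}`. -/
noncomputable def pHat1 {m : ℕ} (p : Ker m) (x : ℝ) : Ker m := pSh p x 1 0 + pSh p x 0 1

/-- `P_{[a,b]} := p^x_{a,b} − p^x_{b,a}`. -/
noncomputable def pBr {m : ℕ} (p : Ker m) (x : ℝ) (a b : ℕ) : Ker m := pSh p x a b - pSh p x b a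

/-- Bounded, absolutely integrable over `(-∞,0]` in each argument, and tending to `0`
as either argument tends to `−∞` (entrywise). -/
def KernelDecay {m : ℕ} (k : Ker m) : Prop :=
  (∃ C, ∀ (z ζ : ℝ) (i j : Fin m), ‖k z ζ i j‖ ≤ C) ∧
  (∀ (ζ : ℝ) (i j : Fin m), IntegrableOn (fun z => k z ζ i j) (Set.Iic (0:ℝ))) ∧
  (∀ (z : ℝ) (i j : Fin m), IntegrableOn (fun ζ => k z ζ i j) (Set.Iic (0:ℝ))) ∧
  (∀ (ζ : ℝ) (i j : Fin m), Tendsto (fun z => k z ζ i j) atBot (nhds 0)) ∧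
  (∀ (z : ℝ) (i j : Fin m), Tendsto (fun ζ => k z ζ i j) atBot (nhds 0))

/-- A scattering function (with the `y`,`t` dependence suppressed): smooth, with all
partial derivatives bounded, integrable over `(-∞,0]` in each argument and decaying at `−∞`. -/
def IsScattering {m : ℕ} (p : Ker m) : Prop :=
  (∀ i j : Fin m, ContDiff ℝ (⊤ : ℕ∞) (fun v : ℝ × ℝ => p v.1 v.2 i j)) ∧
  (∀ a b : ℕ, KernelDecay (pder a b p))

/-- Continuous on `(-∞,0]²`, bounded, and absolutely integrable in each argument. -/
def KernelNice {m : ℕ} (k : Ker m) : Prop :=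
  (∀ i j : Fin m, ContinuousOn (fun v : ℝ × ℝ => k v.1 v.2 i j)
    (Set.Iic (0:ℝ) ×ˢ Set.Iic (0:ℝ))) ∧
  (∃ C, ∀ (z ζ : ℝ) (i j : Fin m), ‖k z ζ i j‖ ≤ C) ∧
  (∀ (ζ : ℝ) (i j : Fin m), IntegrableOn (fun z => k z ζ i j) (Set.Iic (0:ℝ))) ∧
  (∀ (z : ℝ) (i j : Fin m), IntegrableOn (fun ζ => k z ζ i j) (Set.Iic (0:ℝ)))

/-- Entrywise iterated derivative in the parameter `x` of an `x`-family of kernels. -/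
noncomputable def xder {m : ℕ} (n : ℕ) (w : ℝ → Ker m) : ℝ → Ker m :=
  fun x z ζ => Matrix.of fun i j => iteratedDeriv n (fun x' => w x' z ζ i j) x

/-- `w x` is the kernel of `V − id`, `V := (id − P)⁻¹`, with parameter `x`:
a smooth family of kernels, whose partial derivatives are all bounded, integrable
and decaying, solving the resolvent equations `w = p^x + p^x∗w = p^x + w∗p^x`. -/
def IsResolventPlus {m : ℕ} (p : Ker m) (w : ℝ → Ker m) : Prop :=
  (∀ i j : Fin m, ContDiff ℝ (⊤ : ℕ∞) (fun v : ℝ × ℝ × ℝ => w v.1 v.2.1 v.2.2 i j)) ∧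
  (∀ (n a b : ℕ) (x : ℝ), KernelDecay (pder a b (xder n w x))) ∧
  (∀ x, w x = pSh p x 0 0 + conv (pSh p x 0 0) (w x)) ∧
  (∀ x, w x = pSh p x 0 0 + conv (w x) (pSh p x 0 0))

/-- `w x` is the kernel of `V† − id`, `V† := (id + P)⁻¹`, with parameter `x`:
it solves `w = −p^x − p^x∗w = −p^x − w∗p^x`. -/
def IsResolventMinus {m : ℕ} (p : Ker m) (w : ℝ → Ker m) : Prop :=
  (∀ i j : Fin m, ContDiff ℝ (⊤ : ℕ∞) (fun v : ℝ × ℝ × ℝ => w v.1 v.2.1 v.2.2 i j)) ∧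
  (∀ (n a b : ℕ) (x : ℝ), KernelDecay (pder a b (xder n w x))) ∧
  (∀ x, w x = -(pSh p x 0 0) - conv (pSh p x 0 0) (w x)) ∧
  (∀ x, w x = -(pSh p x 0 0) - conv (w x) (pSh p x 0 0))

/-- Kernel of the word `A·V'` where `V' = δ + v`. -/
noncomputable def aV {m : ℕ} (A v : Ker m) : Ker m := A + conv A v

/-- Kernel of the word `V·A` where `V = δ + u`. -/
noncomputable def vA {m : ℕ} (u A : Ker m) : Ker m := A + conv u A

/-- Kernel of the word `V A V'` where `V = δ+u`, `V' = δ+v`. -/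
noncomputable def vAv {m : ℕ} (u A v : Ker m) : Ker m := vA u (aV A v)

/-- Kernel of the word `V A V' B V''` where `V = δ+u`, `V' = δ+v`, `V'' = δ+w'`. -/
noncomputable def vAvBv {m : ℕ} (u A v B w' : Ker m) : Ker m := vAv u (conv (aV A v) B) w'

/-- Entrywise `∂_x` of an `x`-family of kernels. -/
noncomputable def dxK {m : ℕ} (E : ℝ → Ker m) (x : ℝ) : Ker m :=
  fun z ζ => Matrix.of fun i j => deriv (fun x' => E x' z ζ i j) x

end NCKP

namespace NCKP

/-- Matrix-valued functions `p = p(z,ζ;y,t)` on ℝ⁴. -/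
abbrev Ker4 (m : ℕ) := ℝ → ℝ → ℝ → ℝ → Mat m

/-- `∂_z^a ∂_ζ^b` of a four-variable kernel, entrywise. -/
noncomputable def pder4 {m : ℕ} (a b : ℕ) (p : Ker4 m) : Ker4 m :=
  fun z ζ y t => Matrix.of fun i j =>
    iteratedDeriv a (fun z' => iteratedDeriv b (fun ζ' => p z' ζ' y t i j) ζ) z

/-- A scattering function `p = p(z,ζ;y,t)`: smooth, with all its partial derivatives
bounded, absolutely integrable over `(-∞,0]` in each of the first two arguments, and
tending to `0` as either of the first two arguments tends to `−∞`. -/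
def IsScattering4 {m : ℕ} (p : Ker4 m) : Prop :=
  (∀ i j : Fin m, ContDiff ℝ (⊤ : ℕ∞)
    (fun v : ℝ × ℝ × ℝ × ℝ => p v.1 v.2.1 v.2.2.1 v.2.2.2 i j)) ∧
  (∀ (a b : ℕ) (y t : ℝ), KernelDecay (fun z ζ => pder4 a b p z ζ y t))

/-- The linearised KP constraints `∂_y p = ∂_z²p − ∂_ζ²p` and
`∂_t p = 4(∂_z³p + ∂_ζ³p)`, entrywise. -/
def LinearisedKP {m : ℕ} (p : Ker4 m) : Prop :=
  (∀ (z ζ y t : ℝ) (i j : Fin m),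
    deriv (fun y' => p z ζ y' t i j) y
      = (pder4 2 0 p z ζ y t - pder4 0 2 p z ζ y t) i j) ∧
  (∀ (z ζ y t : ℝ) (i j : Fin m),
    deriv (fun t' => p z ζ y t' i j) t
      = (4:ℂ) * ((pder4 3 0 p z ζ y t + pder4 0 3 p z ζ y t) i j))

/-- `∂_x^c ∂_y^d ∂_t^e` of a matrix-valued function of `(x,y,t)`, entrywise. -/
noncomputable def D3 {m : ℕ} (c d e : ℕ) (u : ℝ → ℝ → ℝ → Mat m) : ℝ → ℝ → ℝ → Mat m :=
  fun x y t => Matrix.of fun i j =>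
    iteratedDeriv c (fun x' =>
      iteratedDeriv d (fun y' =>
        iteratedDeriv e (fun t' => u x' y' t' i j) t) y) x

/-- `∂_z^a ∂_ζ^b ∂_x^c ∂_y^d ∂_t^e` of a matrix function of `(z,ζ,x,y,t)`, entrywise. -/
noncomputable def D5 {m : ℕ} (a b c d e : ℕ)
    (g : ℝ → ℝ → ℝ → ℝ → ℝ → Mat m) : ℝ → ℝ → ℝ → ℝ → ℝ → Mat m :=
  fun z ζ x y t => Matrix.of fun i j =>
    iteratedDeriv a (fun z' =>
      iteratedDeriv b (fun ζ' =>
        iteratedDeriv c (fun x' =>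
          iteratedDeriv d (fun y' =>
            iteratedDeriv e (fun t' => g z' ζ' x' y' t' i j) t) y) x) ζ) z

/-- The kernel `p^x_{0,0}(z,ζ) = p(z+x,ζ+x;y,t)` at fixed parameters `x,y,t`. -/
noncomputable def pXK {m : ℕ} (p : Ker4 m) (x y t : ℝ) : Ker m :=
  fun z ζ => p (z + x) (ζ + x) y t

/-- `w = w(z,ζ;x,y,t)` is the kernel of `V − id`, `V := (id − P)⁻¹`: a smooth family
of kernels, all of whose partial derivatives are bounded, integrable and decaying at
`−∞` in `z` and `ζ`, solving `w = p^x + p^x∗w = p^x + w∗p^x`. -/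
def IsResolvent4Plus {m : ℕ} (p : Ker4 m) (w : ℝ → ℝ → ℝ → ℝ → ℝ → Mat m) : Prop :=
  (∀ i j : Fin m, ContDiff ℝ (⊤ : ℕ∞)
    (fun v : ℝ × ℝ × ℝ × ℝ × ℝ => w v.1 v.2.1 v.2.2.1 v.2.2.2.1 v.2.2.2.2 i j)) ∧
  (∀ (a b c d e : ℕ) (x y t : ℝ), KernelDecay (fun z ζ => D5 a b c d e w z ζ x y t)) ∧
  (∀ x y t : ℝ, (fun z ζ => w z ζ x y t)
      = pXK p x y t + conv (pXK p x y t) (fun z ζ => w z ζ x y t)) ∧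
  (∀ x y t : ℝ, (fun z ζ => w z ζ x y t)
      = pXK p x y t + conv (fun z ζ => w z ζ x y t) (pXK p x y t))

/-- `w = w(z,ζ;x,y,t)` is the kernel of `V† − id`, `V† := (id + P)⁻¹`:
it solves `w = −p^x − p^x∗w = −p^x − w∗p^x`. -/
def IsResolvent4Minus {m : ℕ} (p : Ker4 m) (w : ℝ → ℝ → ℝ → ℝ → ℝ → Mat m) : Prop :=
  (∀ i j : Fin m, ContDiff ℝ (⊤ : ℕ∞)
    (fun v : ℝ × ℝ × ℝ × ℝ × ℝ => w v.1 v.2.1 v.2.2.1 v.2.2.2.1 v.2.2.2.2 i j)) ∧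
  (∀ (a b c d e : ℕ) (x y t : ℝ), KernelDecay (fun z ζ => D5 a b c d e w z ζ x y t)) ∧
  (∀ x y t : ℝ, (fun z ζ => w z ζ x y t)
      = -(pXK p x y t) - conv (pXK p x y t) (fun z ζ => w z ζ x y t)) ∧
  (∀ x y t : ℝ, (fun z ζ => w z ζ x y t)
      = -(pXK p x y t) - conv (fun z ζ => w z ζ x y t) (pXK p x y t))

/-- The kernel `q^x := p^x_{1,0} − p^x_{0,1}` at fixed parameters `x,y,t`. -/
noncomputable def qXK {m : ℕ} (p : Ker4 m) (x y t : ℝ) : Ker m :=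
  fun z ζ => pder4 1 0 p (z + x) (ζ + x) y t - pder4 0 1 p (z + x) (ζ + x) y t

/-- `K₊ := q^x + w₊∗q^x + q^x∗w₋ + w₊∗q^x∗w₋`, the kernel of `V P_{[1,0]} V†`. -/
noncomputable def Kplus {m : ℕ} (p : Ker4 m) (wp wm : ℝ → ℝ → ℝ → ℝ → ℝ → Mat m)
    (x y t : ℝ) : Ker m :=
  qXK p x y t + conv (fun z ζ => wp z ζ x y t) (qXK p x y t)
    + conv (qXK p x y t) (fun z ζ => wm z ζ x y t)
    + conv (fun z ζ => wp z ζ x y t) (conv (qXK p x y t) (fun z ζ => wm z ζ x y t))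

/-- `K₋ := q^x + w₋∗q^x + q^x∗w₊ + w₋∗q^x∗w₊`, the kernel of `V† P_{[1,0]} V`. -/
noncomputable def Kminus {m : ℕ} (p : Ker4 m) (wp wm : ℝ → ℝ → ℝ → ℝ → ℝ → Mat m)
    (x y t : ℝ) : Ker m :=
  qXK p x y t + conv (fun z ζ => wm z ζ x y t) (qXK p x y t)
    + conv (qXK p x y t) (fun z ζ => wp z ζ x y t)
    + conv (fun z ζ => wm z ζ x y t) (conv (qXK p x y t) (fun z ζ => wp z ζ x y t))

end NCKP

/-!
A row `r(ζ) = g(0, ζ)` of a solution of the Gelfand–Levitan–Marchenko equation solves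
`r(ζ) = k(x, ζ + x) + ∫ r(ξ) k(ξ + x, ζ + x) dξ`. Because the kernel obeys the linearised KP
equations, `∂_y - ∂_x² + 2 ∂_x ∂_ζ + 2 u_x` and a similar third-order operator containing `∂_t`
map `r` to a solution of the homogeneous row equation, and the mirror equation forces such a
solution to vanish. At `ζ = 0` the two resulting Lax equations, together with the `ζ`-derivative of
the first, form a differential system for `u`, `r_ζ(0)` and `r_ζζ(0)`; eliminating the last two
leaves the `x`-derivative of the potential KP equation.

The decay of `g` is only assumed pointwise in `(x, y, t)`, so that dominated convergence is not
available for all parameters. By Fatou and Baire it is available on a dense open set of parameters,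
which is enough since all identities to be proved are between continuous functions.
-/

namespace NCKP

open Set Topology
open scoped ContDiff ENNReal NNReal

/-! ### Smooth functions and directional derivatives -/

section SmoothMap

variable {V W A : Type*} [NormedAddCommGroup V] [NormedSpace ℝ V]
  [NormedAddCommGroup W] [NormedSpace ℝ W] [NormedRing A] [NormedAlgebra ℝ A]

variable (V A) in
/-- The algebra of smooth functions `V → A`, with pointwise operations. -/
def smoothAlgebra : Subalgebra ℝ (V → A) where
  carrier := {f | ContDiff ℝ ∞ f}
  mul_mem' (hf : ContDiff ℝ ∞ _) (hg : ContDiff ℝ ∞ _) := hf.mul hg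
  add_mem' (hf : ContDiff ℝ ∞ _) (hg : ContDiff ℝ ∞ _) := hf.add hg
  algebraMap_mem' c := (contDiff_const : ContDiff ℝ ∞ fun _ : V => algebraMap ℝ A c)

variable (V A) in
/-- Smooth functions `V → A` as a type, so that the ring structure and the operators acting on
smooth functions can be used in computations. -/
abbrev SmoothMap : Type _ := smoothAlgebra V A

instance : CoeFun (SmoothMap V A) fun _ => V → A := ⟨Subtype.val⟩

namespace SmoothMap

@[ext] theorem ext {f g : SmoothMap V A} (h : ∀ w, f w = g w) : f = g := Subtype.ext (funext h)

@[simp] theorem add_apply (f g : SmoothMap V A) (w : V) : (f + g) w = f w + g w := rfl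
@[simp] theorem sub_apply (f g : SmoothMap V A) (w : V) : (f - g) w = f w - g w := rfl
@[simp] theorem mul_apply (f g : SmoothMap V A) (w : V) : (f * g) w = f w * g w := rfl
@[simp] theorem smul_apply (c : ℝ) (f : SmoothMap V A) (w : V) : (c • f) w = c • f w := rfl

theorem contDiff (f : SmoothMap V A) : ContDiff ℝ ∞ f := f.2

@[fun_prop] theorem continuous (f : SmoothMap V A) : Continuous f := f.contDiff.continuous

theorem differentiable (f : SmoothMap V A) : Differentiable ℝ f :=
  f.contDiff.differentiable (by simp)

end SmoothMap

variable (A) in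
/-- Directional derivative of smooth functions, as a linear function of the direction. -/
noncomputable def dirDeriv : V →ₗ[ℝ] Module.End ℝ (SmoothMap V A) where
  toFun v :=
    { toFun f := ⟨fun w => fderiv ℝ f w v,
        (f.contDiff.fderiv_right (m := ∞) (by simp)).clm_apply contDiff_const⟩
      map_add' f g := by
        ext w
        exact congrArg (· v) (fderiv_add (f.differentiable w) (g.differentiable w))
      map_smul' c f := by
        ext w
        exact congrArg (· v) (fderiv_const_smul (f.differentiable w) c) }
  map_add' v v' := by ext f w; exact map_add (fderiv ℝ f w) v v'
  map_smul' c v := by ext f w; exact map_smul (fderiv ℝ f w) c v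

theorem dirDeriv_mul (v : V) (f g : SmoothMap V A) :
    dirDeriv A v (f * g) = dirDeriv A v f * g + f * dirDeriv A v g := by
  ext w
  have h := congrArg (· v) (fderiv_mul' (f.differentiable w) (g.differentiable w))
  exact h.trans (add_comm _ _)

theorem commute_dirDeriv (v v' : V) : Commute (dirDeriv A v) (dirDeriv A v') := by
  ext f w
  have hf' : DifferentiableAt ℝ (fderiv ℝ f) w :=
    (f.contDiff.fderiv_right (m := ∞) (by simp)).differentiable (by simp) w
  have second (v v' : V) : dirDeriv A v (dirDeriv A v' f) w = fderiv ℝ (fderiv ℝ f) w v v' := by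
    change fderiv ℝ (fun w => fderiv ℝ f w v') w v = _
    simp [fderiv_clm_apply hf' (differentiableAt_const v')]
  have symm : IsSymmSndFDerivAt ℝ f w :=
    (contDiff_infty.1 f.contDiff 2).contDiffAt.isSymmSndFDerivAt (by simp)
  simpa only [Module.End.mul_apply, second] using symm v v'

theorem hasDerivAt_line (f : SmoothMap V A) (w v : V) (s : ℝ) :
    HasDerivAt (fun s : ℝ => f (w + s • v)) (dirDeriv A v f (w + s • v)) s := by
  have h : HasDerivAt (fun s : ℝ => w + s • v) v s := by
    simpa using ((hasDerivAt_id s).smul_const v).const_add w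
  exact (f.differentiable _).hasFDerivAt.comp_hasDerivAt s h

theorem hasLineDerivAt (f : SmoothMap V A) (w v : V) :
    HasLineDerivAt ℝ f (dirDeriv A v f w) w v := by
  simpa [HasLineDerivAt] using hasDerivAt_line f w v 0

/-- Precomposition of smooth functions with a continuous linear map. -/
def pullback (L : V →L[ℝ] W) : SmoothMap W A →ₐ[ℝ] SmoothMap V A where
  toFun f := ⟨f ∘ L, f.contDiff.comp L.contDiff⟩
  map_one' := rfl
  map_mul' _ _ := rfl
  map_zero' := rfl
  map_add' _ _ := rfl
  commutes' _ := rfl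

theorem dirDeriv_pullback (L : V →L[ℝ] W) (v : V) (f : SmoothMap W A) :
    dirDeriv A v (pullback L f) = pullback L (dirDeriv A (L v) f) := by
  ext w
  change fderiv ℝ (f ∘ L) w v = _
  rw [fderiv_comp w (f.differentiable _) L.differentiableAt, L.fderiv]
  rfl

end SmoothMap

/-! ### Differentiation under the integral sign at generic parameters -/

section DenseInterior

variable {X Y : Type*} [TopologicalSpace X] [TopologicalSpace Y]

variable (X) in
/-- The filter of sets with dense interior: a property holds eventually along it when it holds on a
dense open set. -/
def denseInterior : Filter X where
  sets := {s | Dense (interior s)}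
  univ_sets := by simp [dense_univ]
  sets_of_superset h hst := Dense.mono (interior_mono hst) h
  inter_sets hs ht := by
    rw [mem_ofPred_eq, interior_inter]
    exact Dense.inter_of_isOpen_left hs ht isOpen_interior

theorem eventually_eventually_nhds_denseInterior {P : X → Prop}
    (h : ∀ᶠ w in denseInterior X, P w) : ∀ᶠ w in denseInterior X, ∀ᶠ w' in 𝓝 w, P w' := by
  change Dense (interior {w | {w' | P w'} ∈ 𝓝 w})
  rwa [← interior_eq_nhds', interior_interior]

theorem eq_of_eventuallyEq_denseInterior [T2Space Y] {F G : X → Y} (hF : Continuous F)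
    (hG : Continuous G) (h : F =ᶠ[denseInterior X] G) : F = G :=
  Continuous.ext_on (Dense.mono interior_subset h) hF hG fun _ hw => hw

theorem eventually_locally_bounded_of_lowerSemicontinuous [BaireSpace X] {Φ : X → ℝ≥0∞}
    (hΦ : LowerSemicontinuous Φ) (hfin : ∀ w, Φ w ≠ ⊤) :
    ∀ᶠ w in denseInterior X, ∃ C : ℝ≥0, ∀ᶠ w' in 𝓝 w, Φ w' ≤ C := by
  have cover : ⋃ n : ℕ, Φ ⁻¹' Iic (n : ℝ≥0∞) = univ := by
    refine eq_univ_of_forall fun w => mem_iUnion.2 ?_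
    obtain ⟨n, hn⟩ := ENNReal.exists_nat_gt (hfin w)
    exact ⟨n, hn.le⟩
  have dense := dense_iUnion_interior_of_closed (fun n : ℕ => hΦ.isClosed_preimage (n : ℝ≥0∞)) cover
  refine dense.mono (interior_maximal ?_ (isOpen_iUnion fun _ => isOpen_interior))
  intro w hw
  obtain ⟨n, hn⟩ := mem_iUnion.1 hw
  exact ⟨n, mem_of_superset (mem_interior_iff_mem_nhds.1 hn) fun w' hw' => by simpa using hw'⟩

end DenseInterior

section ParametricIntegral

variable {X P E : Type*} [TopologicalSpace X] [MeasurableSpace X] [OpensMeasurableSpace X]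
  {μ : Measure X} [NormedAddCommGroup E]

theorem lowerSemicontinuous_lintegral_enorm [TopologicalSpace P] [FirstCountableTopology P]
    {f : X × P → E} (hf : Continuous f) :
    LowerSemicontinuous fun w => ∫⁻ ξ, ‖f (ξ, w)‖ₑ ∂μ := by
  refine lowerSemicontinuous_iff_isClosed_preimage.2 fun C => IsSeqClosed.isClosed ?_
  intro u w hu hw
  have fatou : ∫⁻ ξ, liminf (fun n => ‖f (ξ, u n)‖ₑ) atTop ∂μ
      ≤ liminf (fun n => ∫⁻ ξ, ‖f (ξ, u n)‖ₑ ∂μ) atTop :=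
    lintegral_liminf_le fun n =>
      Continuous.measurable (f := fun ξ => ‖f (ξ, u n)‖ₑ) (by fun_prop)
  have pointwise (ξ : X) : liminf (fun n => ‖f (ξ, u n)‖ₑ) atTop = ‖f (ξ, w)‖ₑ :=
    ((Continuous.tendsto (f := fun w => ‖f (ξ, w)‖ₑ) (by fun_prop) w).comp hw).liminf_eq
  simp only [pointwise] at fatou
  exact fatou.trans (liminf_le_of_frequently_le' (Frequently.of_forall hu))

variable [SecondCountableTopology X] [NormedSpace ℝ E] [CompleteSpace E] [SFinite μ]

theorem exists_integrable_bound_of_lintegral_deriv_le {φ φ' : ℝ → X → E}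
    (hφ : ∀ x s, HasDerivAt (φ · x) (φ' s x) s) (hφ' : Continuous φ'.uncurry)
    (hint : Integrable (φ 0) μ) {ε : ℝ} {C : ℝ≥0}
    (hC : ∀ s ∈ Ioo (-ε) ε, ∫⁻ x, ‖φ' s x‖ₑ ∂μ ≤ C) :
    ∃ B : X → ℝ, Integrable B μ ∧ ∀ s ∈ Ioo (-ε) ε, ∀ x, ‖φ s x‖ ≤ B x := by
  have integrable_deriv :
      Integrable φ'.uncurry ((volume.restrict (Ioo (-ε) ε)).prod μ) := by
    refine ⟨hφ'.aestronglyMeasurable, ?_⟩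
    rw [HasFiniteIntegral, lintegral_prod _ hφ'.enorm.measurable.aemeasurable]
    calc ∫⁻ s in Ioo (-ε) ε, ∫⁻ x, ‖φ' s x‖ₑ ∂μ
        ≤ ∫⁻ _ in Ioo (-ε) ε, C := setLIntegral_mono' measurableSet_Ioo hC
      _ < ⊤ := by
        simpa using ENNReal.mul_lt_top ENNReal.coe_lt_top ENNReal.ofReal_lt_top
  refine ⟨fun x => ‖φ 0 x‖ + ∫ s in Ioo (-ε) ε, ‖φ' s x‖,
    hint.norm.add integrable_deriv.norm.integral_prod_right, fun s hs x => ?_⟩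
  have cont : Continuous fun s => φ' s x := by fun_prop
  have ftc : φ s x = φ 0 x + ∫ σ in (0 : ℝ)..s, φ' σ x := by
    rw [intervalIntegral.integral_eq_sub_of_hasDerivAt (fun σ _ => hφ x σ)
      (cont.intervalIntegrable _ _), add_sub_cancel]
  have subset : uIoc 0 s ⊆ Ioo (-ε) ε := by
    have h0 : (0 : ℝ) ∈ Ioo (-ε) ε := by constructor <;> linarith [hs.1, hs.2]
    exact uIoc_subset_uIcc.trans (ordConnected_Ioo.uIcc_subset h0 hs)
  rw [ftc]
  refine (norm_add_le _ _).trans (add_le_add_right ?_ _)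
  refine intervalIntegral.norm_integral_le_integral_norm_uIoc.trans ?_
  exact setIntegral_mono_set (cont.norm.integrableOn_Icc.mono_set Ioo_subset_Icc_self)
    (ae_of_all _ fun _ => norm_nonneg _) subset.eventuallyLE

theorem hasDerivAt_integral_of_lintegral_deriv2_le {φ φ' φ'' : ℝ → X → E}
    (hφ : ∀ x s, HasDerivAt (φ · x) (φ' s x) s) (hφ' : ∀ x s, HasDerivAt (φ' · x) (φ'' s x) s)
    (hφ_cont : ∀ s, Continuous (φ s)) (hφ'' : Continuous φ''.uncurry)
    (hint : Integrable (φ 0) μ) (hint' : Integrable (φ' 0) μ)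
    {C : ℝ≥0} (hC : ∀ᶠ s in 𝓝 0, ∫⁻ x, ‖φ'' s x‖ₑ ∂μ ≤ C) :
    HasDerivAt (fun s => ∫ x, φ s x ∂μ) (∫ x, φ' 0 x ∂μ) 0 := by
  obtain ⟨ε, hε, hball⟩ := Metric.eventually_nhds_iff_ball.1 hC
  simp only [Real.ball_eq_Ioo, zero_sub, zero_add] at hball
  obtain ⟨B, hB, bound⟩ := exists_integrable_bound_of_lintegral_deriv_le hφ' hφ'' hint' hball
  exact (hasDerivAt_integral_of_dominated_loc_of_deriv_le (𝕜 := ℝ)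
    (Ioo_mem_nhds (neg_lt_zero.2 hε) hε)
    (Eventually.of_forall fun s => (hφ_cont s).aestronglyMeasurable) hint
    hint'.aestronglyMeasurable (ae_of_all _ fun x s hs => bound s hs x) hB
    (ae_of_all _ fun x s _ => hφ x s)).2

end ParametricIntegral

/-! ### Rows, kernels and their convolution -/

section RowConvolution

variable {A : Type*} [NormedRing A] [NormedAlgebra ℝ A]

/-- The parameters `(x, y, t)`. -/
abbrev Params : Type := ℝ × ℝ × ℝ

variable (A) in
/-- Smooth rows `f(ζ; x, y, t)`, such as the row `z = 0` of the solution of the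
Gelfand–Levitan–Marchenko equation. -/
abbrev Row : Type _ := SmoothMap (ℝ × Params) A

variable (A) in
/-- Smooth kernels `k(z, ζ; y, t)`, entering the Gelfand–Levitan–Marchenko equation through
`k(z + x, ζ + x; y, t)`. -/
abbrev SmoothKernel : Type _ := SmoothMap (ℝ × ℝ × ℝ × ℝ) A

local notation "∂₁" => dirDeriv A ((1, 0, 0, 0) : ℝ × ℝ × ℝ × ℝ)
local notation "∂₂" => dirDeriv A ((0, 1, 0, 0) : ℝ × ℝ × ℝ × ℝ)
local notation "∂₃" => dirDeriv A ((0, 0, 1, 0) : ℝ × ℝ × ℝ × ℝ)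
local notation "∂₄" => dirDeriv A ((0, 0, 0, 1) : ℝ × ℝ × ℝ × ℝ)
local notation "δ" => dirDeriv A ((-1, 1, 0, 0) : ℝ × ℝ × ℝ × ℝ)

theorem dirDeriv_eq_sum_coordinates (a b c d : ℝ) :
    dirDeriv A (a, b, c, d) = a • ∂₁ + b • ∂₂ + c • ∂₃ + d • ∂₄ := by
  simp only [← map_smul, ← map_add]
  simp

theorem dirDeriv_antidiagonal_eq_sub (f : Row A) : δ f = ∂₂ f - ∂₁ f := by
  rw [dirDeriv_eq_sum_coordinates (-1)]
  simp [neg_add_eq_sub]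

variable (A) in
/-- The mixed derivative `∂₁^a ∂₂^b ∂₃^c ∂₄^d`. -/
noncomputable def mixedDeriv (a b c d : ℕ) : Module.End ℝ (SmoothMap (ℝ × ℝ × ℝ × ℝ) A) :=
  ∂₁ ^ a * (∂₂ ^ b * (∂₃ ^ c * ∂₄ ^ d))

theorem mixedDeriv_mul_dirDeriv (a b c d : ℕ) (v : ℝ × ℝ × ℝ × ℝ) :
    mixedDeriv A a b c d * dirDeriv A v =
      v.1 • mixedDeriv A (a + 1) b c d + v.2.1 • mixedDeriv A a (b + 1) c d
        + v.2.2.1 • mixedDeriv A a b (c + 1) d + v.2.2.2 • mixedDeriv A a b c (d + 1) := by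
  have comm (n : ℕ) (v v' : ℝ × ℝ × ℝ × ℝ) :
      dirDeriv A v ^ n * dirDeriv A v' = dirDeriv A v' * dirDeriv A v ^ n :=
    ((commute_dirDeriv v v').pow_left n).eq
  obtain ⟨v₁, v₂, v₃, v₄⟩ := v
  have left_comm (n : ℕ) (v v' : ℝ × ℝ × ℝ × ℝ) (D : Module.End ℝ (SmoothMap _ A)) :
      dirDeriv A v ^ n * (dirDeriv A v' * D) = dirDeriv A v' * (dirDeriv A v ^ n * D) := by
    rw [← mul_assoc, comm, mul_assoc]
  simp only [dirDeriv_eq_sum_coordinates v₁, mixedDeriv, mul_add, mul_smul_comm, pow_succ,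
    mul_assoc]
  rw [comm d _ (1, 0, 0, 0), left_comm c _ (1, 0, 0, 0), left_comm b _ (1, 0, 0, 0),
    comm d _ (0, 1, 0, 0), left_comm c _ (0, 1, 0, 0), comm d _ (0, 0, 1, 0)]

variable (A) in
/-- Rows `f` for which every `f(·; x, y, t)` is integrable over `(-∞, 0]`. -/
def integrableRows : Submodule ℝ (Row A) where
  carrier := {f | ∀ w, IntegrableOn (fun ξ => f (ξ, w)) (Iic 0) volume}
  add_mem' hf hg w := (hf w).add (hg w)
  zero_mem' _ := integrableOn_zero
  smul_mem' c _ hf w := (hf w).fun_smul c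

variable (A) in
/-- Rows all of whose derivatives are integrable over `(-∞, 0]`. -/
noncomputable def rows : Submodule ℝ (Row A) :=
  ⨅ (a) (b) (c) (d), (integrableRows A).comap (mixedDeriv A a b c d)

theorem mem_rows {f : Row A} :
    f ∈ rows A ↔ ∀ a b c d, mixedDeriv A a b c d f ∈ integrableRows A := by
  simp [rows]

theorem mem_integrableRows_of_mem_rows {f : Row A} (hf : f ∈ rows A) : f ∈ integrableRows A := by
  simpa [mixedDeriv] using mem_rows.1 hf 0 0 0 0

theorem dirDeriv_mem_rows {f : Row A} (hf : f ∈ rows A) (v : ℝ × Params) :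
    dirDeriv A v f ∈ rows A := by
  rw [mem_rows] at hf ⊢
  intro a b c d
  rw [← Module.End.mul_apply, mixedDeriv_mul_dirDeriv]
  exact add_mem (add_mem (add_mem (Submodule.smul_mem _ _ (hf _ _ _ _))
    (Submodule.smul_mem _ _ (hf _ _ _ _))) (Submodule.smul_mem _ _ (hf _ _ _ _)))
    (Submodule.smul_mem _ _ (hf _ _ _ _))

theorem pow_dirDeriv_mem_rows {f : Row A} (hf : f ∈ rows A) (v : ℝ × Params) (n : ℕ) :
    (dirDeriv A v ^ n) f ∈ rows A := by
  induction n with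
  | zero => exact hf
  | succ n ih => rw [pow_succ']; exact dirDeriv_mem_rows ih v

variable (A) in
/-- Kernels `k` for which every `k(·, ·; y, t)` is bounded. -/
def boundedKernels : Submodule ℝ (SmoothKernel A) where
  carrier := {k | ∀ w, ∃ C, ∀ z ζ, ‖k (z, ζ, w)‖ ≤ C}
  add_mem' hf hg w := by
    obtain ⟨C, hC⟩ := hf w
    obtain ⟨C', hC'⟩ := hg w
    exact ⟨C + C', fun z ζ => norm_add_le_of_le (hC z ζ) (hC' z ζ)⟩
  zero_mem' _ := ⟨0, fun _ _ => norm_zero.le⟩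
  smul_mem' c k hk w := by
    obtain ⟨C, hC⟩ := hk w
    refine ⟨‖c‖ * C, fun z ζ => (norm_smul_le c _).trans ?_⟩
    exact mul_le_mul_of_nonneg_left (hC z ζ) (norm_nonneg c)

variable (A) in
/-- Kernels satisfying the linearised KP equations `∂_y k = ∂_z²k - ∂_ζ²k` and
`∂_t k = 4(∂_z³k + ∂_ζ³k)`, all of whose derivatives in `z` and `ζ` are bounded. -/
noncomputable def linearisedKPKernels : Submodule ℝ (SmoothKernel A) :=
  (⨅ (a) (b), (boundedKernels A).comap (∂₁ ^ a * ∂₂ ^ b)) ⊓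
    LinearMap.eqLocus (∂₃ + ∂₂ ^ 2) (∂₁ ^ 2) ⊓
    LinearMap.eqLocus ∂₄ ((4 : ℝ) • (∂₁ ^ 3 + ∂₂ ^ 3))

theorem mem_linearisedKPKernels {k : SmoothKernel A} :
    k ∈ linearisedKPKernels A ↔
      (∀ a b, (∂₁ ^ a * ∂₂ ^ b) k ∈ boundedKernels A) ∧
        ∂₃ k = (∂₁ ^ 2) k - (∂₂ ^ 2) k ∧ ∂₄ k = (4 : ℝ) • ((∂₁ ^ 3) k + (∂₂ ^ 3) k) := by
  simp [linearisedKPKernels, and_assoc, eq_sub_iff_add_eq]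

theorem mem_boundedKernels_of_mem_linearisedKPKernels {k : SmoothKernel A}
    (hk : k ∈ linearisedKPKernels A) : k ∈ boundedKernels A := by
  simpa using (mem_linearisedKPKernels.1 hk).1 0 0

theorem dirDeriv_mem_linearisedKPKernels {k : SmoothKernel A} (hk : k ∈ linearisedKPKernels A)
    (v : ℝ × ℝ × ℝ × ℝ) : dirDeriv A v k ∈ linearisedKPKernels A := by
  obtain ⟨bounded, hk₃, hk₄⟩ := mem_linearisedKPKernels.1 hk
  have comm (v' : ℝ × ℝ × ℝ × ℝ) (n : ℕ) :
      (dirDeriv A v' ^ n) (dirDeriv A v k) = dirDeriv A v ((dirDeriv A v' ^ n) k) :=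
    congrArg (· k) ((commute_dirDeriv v' v).pow_left n).eq
  refine mem_linearisedKPKernels.2 ⟨fun a b => ?_, ?_, ?_⟩
  · have mem (i j : ℕ) : (∂₁ ^ a * ∂₂ ^ b) ((∂₁ ^ i * ∂₂ ^ j) k) ∈ boundedKernels A := by
      rw [← Module.End.mul_apply, ((commute_dirDeriv _ _).pow_pow b i).mul_mul_mul_comm,
        ← pow_add, ← pow_add]
      exact bounded _ _
    obtain ⟨v₁, v₂, v₃, v₄⟩ := v
    have expand : dirDeriv A (v₁, v₂, v₃, v₄) k =
        v₁ • (∂₁ ^ 1 * ∂₂ ^ 0) k + v₂ • (∂₁ ^ 0 * ∂₂ ^ 1) k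
          + v₃ • ((∂₁ ^ 2 * ∂₂ ^ 0) k - (∂₁ ^ 0 * ∂₂ ^ 2) k)
          + v₄ • (4 : ℝ) • ((∂₁ ^ 3 * ∂₂ ^ 0) k + (∂₁ ^ 0 * ∂₂ ^ 3) k) := by
      simp only [dirDeriv_eq_sum_coordinates v₁, LinearMap.add_apply, LinearMap.smul_apply, hk₃,
        hk₄, pow_zero, pow_one, one_mul, mul_one]
    rw [expand, ← Submodule.mem_comap]
    refine add_mem (add_mem (add_mem ?_ ?_) ?_) ?_
    · exact Submodule.smul_mem _ _ (mem 1 0)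
    · exact Submodule.smul_mem _ _ (mem 0 1)
    · exact Submodule.smul_mem _ _ (Submodule.sub_mem _ (mem 2 0) (mem 0 2))
    · exact Submodule.smul_mem _ _ (Submodule.smul_mem _ _ (add_mem (mem 3 0) (mem 0 3)))
  · rw [comm, comm, ← map_sub, ← hk₃]
    exact comm _ 1
  · rw [comm, comm, ← map_add, ← map_smul, ← hk₄]
    exact comm _ 1

theorem pow_dirDeriv_mem_linearisedKPKernels {k : SmoothKernel A} (hk : k ∈ linearisedKPKernels A)
    (v : ℝ × ℝ × ℝ × ℝ) (n : ℕ) : (dirDeriv A v ^ n) k ∈ linearisedKPKernels A := by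
  induction n with
  | zero => exact hk
  | succ n ih => rw [pow_succ']; exact dirDeriv_mem_linearisedKPKernels ih v

/-- The substitution `(ξ, ζ; x, y, t) ↦ (ξ + x, ζ + x; y, t)` of the Gelfand–Levitan–Marchenko
equation. -/
noncomputable def kernelShift : ℝ × ℝ × Params →L[ℝ] ℝ × ℝ × ℝ × ℝ where
  toFun v := (v.1 + v.2.2.1, v.2.1 + v.2.2.1, v.2.2.2)
  map_add' v v' := by simp [add_add_add_comm]
  map_smul' c v := by simp [mul_add]

theorem kernelShift_zeta : kernelShift (0, 1, 0, 0, 0) = (0, 1, 0, 0) := by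
  ext <;> simp [kernelShift]

theorem kernelShift_antidiagonal : kernelShift (0, -1, 1, 0, 0) = (1, 0, 0, 0) := by
  ext <;> simp [kernelShift]

theorem kernelShift_y : kernelShift (0, 0, 0, 1, 0) = (0, 0, 1, 0) := by
  ext <;> simp [kernelShift]

theorem kernelShift_t : kernelShift (0, 0, 0, 0, 1) = (0, 0, 0, 1) := by
  ext <;> simp [kernelShift]

/-- The integrand `f(ξ; x, y, t) k(ξ + x, ζ + x; y, t)` as a function of `(ξ, ζ, x, y, t)`. -/
noncomputable def rowIntegrand (f : Row A) (k : SmoothKernel A) : SmoothMap (ℝ × ℝ × Params) A :=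
  pullback (.prodMap (.id ℝ ℝ) (.snd ℝ ℝ Params)) f * pullback kernelShift k

theorem dirDeriv_rowIntegrand (f : Row A) (k : SmoothKernel A) (v : ℝ × ℝ × Params) :
    dirDeriv A v (rowIntegrand f k) =
      rowIntegrand (dirDeriv A (v.1, v.2.2) f) k
        + rowIntegrand f (dirDeriv A (kernelShift v) k) := by
  rw [rowIntegrand, dirDeriv_mul, dirDeriv_pullback, dirDeriv_pullback]
  rfl

variable (A) in
/-- Integrands `Φ(ξ, ζ, w)` whose `L¹` norm in `ξ` is, for each `w`, bounded uniformly in `ζ`. -/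
def uniformlyIntegrable : AddSubmonoid (SmoothMap (ℝ × ℝ × Params) A) where
  carrier := {Φ | ∀ w, ∃ C : ℝ≥0, ∀ ζ, ∫⁻ ξ in Iic 0, ‖Φ (ξ, ζ, w)‖ₑ ∂volume ≤ C}
  zero_mem' _ := ⟨0, fun ζ => by simp⟩
  add_mem' {Φ Ψ} hΦ hΨ w := by
    obtain ⟨C, hC⟩ := hΦ w
    obtain ⟨C', hC'⟩ := hΨ w
    refine ⟨C + C', fun ζ => ?_⟩
    calc ∫⁻ ξ in Iic 0, ‖(Φ + Ψ) (ξ, ζ, w)‖ₑ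
        ≤ ∫⁻ ξ in Iic 0, (‖Φ (ξ, ζ, w)‖ₑ + ‖Ψ (ξ, ζ, w)‖ₑ) :=
        lintegral_mono fun _ => enorm_add_le _ _
      _ = (∫⁻ ξ in Iic 0, ‖Φ (ξ, ζ, w)‖ₑ) + ∫⁻ ξ in Iic 0, ‖Ψ (ξ, ζ, w)‖ₑ :=
        lintegral_add_left (Continuous.measurable (by fun_prop)) _
      _ ≤ C + C' := add_le_add (hC ζ) (hC' ζ)

theorem integrableOn_of_mem_uniformlyIntegrable {Φ : SmoothMap (ℝ × ℝ × Params) A}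
    (hΦ : Φ ∈ uniformlyIntegrable A) (q : ℝ × Params) :
    IntegrableOn (fun ξ => Φ (ξ, q)) (Iic 0) := by
  obtain ⟨C, hC⟩ := hΦ q.2
  exact ⟨Continuous.aestronglyMeasurable (by fun_prop), (hC q.1).trans_lt ENNReal.coe_lt_top⟩

theorem rowIntegrand_mem_uniformlyIntegrable {f : Row A} {k : SmoothKernel A}
    (hf : f ∈ integrableRows A) (hk : k ∈ boundedKernels A) :
    rowIntegrand f k ∈ uniformlyIntegrable A := by
  intro w
  obtain ⟨C, hC⟩ := hk w.2
  have enorm_le (z ζ : ℝ) : ‖k (z, ζ, w.2)‖ₑ ≤ C.toNNReal := by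
    rw [enorm_eq_nnnorm, ENNReal.coe_le_coe,
      Real.le_toNNReal_iff_coe_le ((norm_nonneg _).trans (hC z ζ))]
    exact hC z ζ
  refine ⟨(∫⁻ ξ in Iic 0, ‖f (ξ, w)‖ₑ).toNNReal * C.toNNReal, fun ζ => ?_⟩
  rw [ENNReal.coe_mul, ENNReal.coe_toNNReal (hf w).2.ne,
    ← lintegral_mul_const' _ _ ENNReal.coe_ne_top]
  refine lintegral_mono fun ξ => ?_
  calc ‖f (ξ, w) * k (ξ + w.1, ζ + w.1, w.2)‖ₑ
      ≤ ‖f (ξ, w)‖ₑ * ‖k (ξ + w.1, ζ + w.1, w.2)‖ₑ := by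
        simpa only [enorm_eq_nnnorm, ← ENNReal.coe_mul, ENNReal.coe_le_coe]
          using nnnorm_mul_le _ _
    _ ≤ ‖f (ξ, w)‖ₑ * C.toNNReal := by gcongr; exact enorm_le _ _

/-- The convolution `∫ f(ξ; x, y, t) k(ξ + x, ζ + x; y, t) dξ` over `(-∞, 0]`. -/
noncomputable def rowConv (f : Row A) (k : SmoothKernel A) (q : ℝ × Params) : A :=
  ∫ ξ in Iic 0, rowIntegrand f k (ξ, q)

theorem rowConv_add_left {f f' : Row A} {k : SmoothKernel A} (hf : f ∈ integrableRows A)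
    (hf' : f' ∈ integrableRows A) (hk : k ∈ boundedKernels A) :
    rowConv (f + f') k = rowConv f k + rowConv f' k := by
  ext q
  simp only [rowConv, rowIntegrand, map_add, add_mul, SmoothMap.add_apply, Pi.add_apply]
  exact integral_add
    (integrableOn_of_mem_uniformlyIntegrable (rowIntegrand_mem_uniformlyIntegrable hf hk) q)
    (integrableOn_of_mem_uniformlyIntegrable (rowIntegrand_mem_uniformlyIntegrable hf' hk) q)

theorem rowConv_smul_left (c : ℝ) (f : Row A) (k : SmoothKernel A) :
    rowConv (c • f) k = c • rowConv f k := by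
  ext q
  simp only [rowConv, rowIntegrand, map_smul, smul_mul_assoc, SmoothMap.smul_apply, Pi.smul_apply]
  exact integral_smul c _

theorem rowConv_zero_left (k : SmoothKernel A) : rowConv 0 k = 0 := by
  simpa using rowConv_smul_left 0 0 k

theorem rowConv_add_right {f : Row A} {k k' : SmoothKernel A} (hf : f ∈ integrableRows A)
    (hk : k ∈ boundedKernels A) (hk' : k' ∈ boundedKernels A) :
    rowConv f (k + k') = rowConv f k + rowConv f k' := by
  ext q
  simp only [rowConv, rowIntegrand, map_add, mul_add, SmoothMap.add_apply, Pi.add_apply]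
  exact integral_add
    (integrableOn_of_mem_uniformlyIntegrable (rowIntegrand_mem_uniformlyIntegrable hf hk) q)
    (integrableOn_of_mem_uniformlyIntegrable (rowIntegrand_mem_uniformlyIntegrable hf hk') q)

theorem rowConv_smul_right (c : ℝ) (f : Row A) (k : SmoothKernel A) :
    rowConv f (c • k) = c • rowConv f k := by
  ext q
  simp only [rowConv, rowIntegrand, map_smul, mul_smul_comm, SmoothMap.smul_apply, Pi.smul_apply]
  exact integral_smul c _

/-- A second derivative in `L¹` for every parameter value is, by Baire's theorem, locally bounded
in `L¹` for generic ones, which legitimises differentiation under the integral sign there. -/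
theorem eventually_hasLineDerivAt_integral [CompleteSpace A]
    {Φ : SmoothMap (ℝ × ℝ × Params) A} {v : ℝ × Params}
    (hΦ : Φ ∈ uniformlyIntegrable A) (hΦ' : dirDeriv A (0, v) Φ ∈ uniformlyIntegrable A)
    (hΦ'' : dirDeriv A (0, v) (dirDeriv A (0, v) Φ) ∈ uniformlyIntegrable A) :
    ∀ᶠ w in denseInterior Params, ∀ ζ,
      HasLineDerivAt ℝ (fun q => ∫ ξ in Iic 0, Φ (ξ, q))
        (∫ ξ in Iic 0, dirDeriv A (0, v) Φ (ξ, ζ, w)) (ζ, w) v := by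
  set Φ'' := dirDeriv A (0, v) (dirDeriv A (0, v) Φ)
  have lsc : LowerSemicontinuous fun w => ⨆ ζ, ∫⁻ ξ in Iic 0, ‖Φ'' (ξ, ζ, w)‖ₑ :=
    lowerSemicontinuous_iSup fun ζ =>
      lowerSemicontinuous_lintegral_enorm (f := fun η : ℝ × Params => Φ'' (η.1, ζ, η.2))
        (by fun_prop)
  have finite (w : Params) : ⨆ ζ, ∫⁻ ξ in Iic 0, ‖Φ'' (ξ, ζ, w)‖ₑ ≠ ⊤ := by
    obtain ⟨C, hC⟩ := hΦ'' w
    exact ((iSup_le hC).trans_lt ENNReal.coe_lt_top).ne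
  filter_upwards [eventually_locally_bounded_of_lowerSemicontinuous lsc finite]
    with w ⟨C, hC⟩ ζ
  have line (ξ s : ℝ) : (ξ, ζ, w) + s • (0, v) = (ξ, (ζ, w) + s • v) := by simp
  have bound : ∀ᶠ s : ℝ in 𝓝 0, ∫⁻ ξ in Iic 0, ‖Φ'' ((ξ, ζ, w) + s • (0, v))‖ₑ ≤ C := by
    have tendsto : Tendsto (fun s : ℝ => w + s • v.2) (𝓝 0) (𝓝 w) := by
      simpa using Continuous.tendsto (f := fun s : ℝ => w + s • v.2) (by fun_prop) 0
    filter_upwards [tendsto.eventually hC] with s hs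
    simp only [line]
    exact (le_iSup (fun ζ => ∫⁻ ξ in Iic 0, ‖Φ'' (ξ, ζ, w + s • v.2)‖ₑ) (ζ + s • v.1)).trans hs
  have key := hasDerivAt_integral_of_lintegral_deriv2_le (μ := volume.restrict (Iic 0))
    (φ := fun s ξ => Φ ((ξ, ζ, w) + s • (0, v)))
    (φ' := fun s ξ => dirDeriv A (0, v) Φ ((ξ, ζ, w) + s • (0, v)))
    (φ'' := fun s ξ => Φ'' ((ξ, ζ, w) + s • (0, v)))
    (fun ξ s => hasDerivAt_line Φ _ _ s) (fun ξ s => hasDerivAt_line (dirDeriv A (0, v) Φ) _ _ s)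
    (fun s => by fun_prop) (by simp only [Function.uncurry_def]; fun_prop)
    (by simpa [IntegrableOn] using integrableOn_of_mem_uniformlyIntegrable hΦ (ζ, w))
    (by simpa [IntegrableOn] using integrableOn_of_mem_uniformlyIntegrable hΦ' (ζ, w)) bound
  simpa only [HasLineDerivAt, line, zero_smul, add_zero] using key

theorem eventually_hasLineDerivAt_rowConv [CompleteSpace A] {f : Row A} {k : SmoothKernel A}
    (hf : f ∈ rows A) (hk : k ∈ linearisedKPKernels A) (v : ℝ × Params) :
    ∀ᶠ w in denseInterior Params, ∀ ζ,
      HasLineDerivAt ℝ (rowConv f k)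
        (rowConv (dirDeriv A (0, v.2) f) k (ζ, w)
          + rowConv f (dirDeriv A (kernelShift (0, v)) k) (ζ, w)) (ζ, w) v := by
  have mem {f : Row A} {k : SmoothKernel A} (hf : f ∈ rows A) (hk : k ∈ linearisedKPKernels A) :
      rowIntegrand f k ∈ uniformlyIntegrable A :=
    rowIntegrand_mem_uniformlyIntegrable (mem_integrableRows_of_mem_rows hf)
      (mem_boundedKernels_of_mem_linearisedKPKernels hk)
  have hf' : dirDeriv A (0, v.2) f ∈ rows A := dirDeriv_mem_rows hf _
  have hk' := dirDeriv_mem_linearisedKPKernels hk (kernelShift (0, v))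
  have hΦ' : dirDeriv A (0, v) (rowIntegrand f k) ∈ uniformlyIntegrable A := by
    rw [dirDeriv_rowIntegrand]
    exact add_mem (mem hf' hk) (mem hf hk')
  have hΦ'' : dirDeriv A (0, v) (dirDeriv A (0, v) (rowIntegrand f k)) ∈ uniformlyIntegrable A := by
    simp only [dirDeriv_rowIntegrand, map_add]
    exact add_mem
      (add_mem (mem (dirDeriv_mem_rows hf' _) hk) (mem hf' hk'))
      (add_mem (mem hf' hk') (mem hf (dirDeriv_mem_linearisedKPKernels hk' _)))
  filter_upwards [eventually_hasLineDerivAt_integral (mem hf hk) hΦ' hΦ''] with w hw ζ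
  have integral_add := integral_add
    (integrableOn_of_mem_uniformlyIntegrable (mem hf' hk) (ζ, w))
    (integrableOn_of_mem_uniformlyIntegrable (mem hf hk') (ζ, w))
  have hw := hw ζ
  rw [dirDeriv_rowIntegrand] at hw
  exact integral_add ▸ hw

/-- The function `ζ ↦ k(x, ζ + x; y, t)`, the row `z = 0` of the shifted kernel. -/
noncomputable def kernelRow : SmoothKernel A →ₐ[ℝ] Row A :=
  pullback (kernelShift.comp (.inr ℝ ℝ (ℝ × Params)))

/-- The boundary value `f(0; x, y, t)`. -/
noncomputable def boundary : Row A →ₐ[ℝ] SmoothMap Params A := pullback (.inr ℝ ℝ Params)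

/-- The boundary value `f(0; x, y, t)` as a row independent of `ζ`. -/
noncomputable def boundaryRow : Row A →ₐ[ℝ] Row A := (pullback (.snd ℝ ℝ Params)).comp boundary

theorem rowConv_boundaryRow_mul (c : Row A) {f : Row A} {k : SmoothKernel A}
    (hf : f ∈ integrableRows A) (hk : k ∈ boundedKernels A) :
    rowConv (boundaryRow c * f) k = boundaryRow c * rowConv f k := by
  ext q
  simp only [rowConv, rowIntegrand, map_mul, mul_assoc]
  exact integral_const_mul_of_integrable (c := c (0, q.2))
    (integrableOn_of_mem_uniformlyIntegrable (rowIntegrand_mem_uniformlyIntegrable hf hk) q)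

theorem rowConv_dirDeriv_left [CompleteSpace A] {f : Row A} {k : SmoothKernel A} (hf : f ∈ rows A)
    (hk : k ∈ linearisedKPKernels A) :
    rowConv f (∂₁ k) = boundaryRow f * kernelRow k - rowConv (∂₁ f) k := by
  ext q
  have integrable {f : Row A} {k : SmoothKernel A} (hf : f ∈ rows A)
      (hk : k ∈ linearisedKPKernels A) : IntegrableOn (fun ξ => rowIntegrand f k (ξ, q)) (Iic 0) :=
    integrableOn_of_mem_uniformlyIntegrable (rowIntegrand_mem_uniformlyIntegrable
      (mem_integrableRows_of_mem_rows hf) (mem_boundedKernels_of_mem_linearisedKPKernels hk)) q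
  have deriv (ξ : ℝ) : HasDerivAt (fun ξ => rowIntegrand f k (ξ, q))
      (rowIntegrand (∂₁ f) k (ξ, q) + rowIntegrand f (∂₁ k) (ξ, q)) ξ := by
    have line (ξ : ℝ) : (0, q) + ξ • ((1, 0) : ℝ × ℝ × Params) = (ξ, q) := by simp
    have shift : kernelShift (1, 0) = (1, 0, 0, 0) := by ext <;> simp [kernelShift]
    have h := hasDerivAt_line (rowIntegrand f k) (0, q) (1, 0) ξ
    rw [dirDeriv_rowIntegrand, shift] at h
    simp only [line] at h
    exact h
  have hf' := integrable (dirDeriv_mem_rows hf (1, 0, 0, 0)) hk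
  have hk' := integrable hf (dirDeriv_mem_linearisedKPKernels hk (1, 0, 0, 0))
  have ftc := integral_Iic_of_hasDerivAt_of_tendsto' (fun ξ _ => deriv ξ) (hf'.add hk')
    (tendsto_zero_of_hasDerivAt_of_integrableOn_Iic (fun ξ _ => deriv ξ) (hf'.add hk')
      (integrable hf hk))
  rw [integral_add hf' hk', sub_zero] at ftc
  exact eq_sub_of_add_eq' ftc

/-! ### The row equation and its derivatives -/

/-- The filter of properties of `(ζ, w)` that hold for all `ζ < 0` and generic parameters `w`. -/
def generic : Filter (ℝ × Params) := 𝓟 (Iio 0) ×ˢ denseInterior Params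

theorem eventually_generic_iff {P : ℝ × Params → Prop} :
    (∀ᶠ q in generic, P q) ↔ ∀ᶠ w in denseInterior Params, ∀ ζ < 0, P (ζ, w) := by
  rw [generic, eventually_swap_iff, eventually_prod_principal_iff]
  rfl

theorem dirDeriv_eventuallyEq_generic {H : Row A} {F F' : ℝ × Params → A} {v : ℝ × Params}
    (hH : H =ᶠ[generic] F)
    (hF : ∀ᶠ w in denseInterior Params, ∀ ζ, HasLineDerivAt ℝ F (F' (ζ, w)) (ζ, w) v) :
    dirDeriv A v H =ᶠ[generic] F' := by
  refine eventually_generic_iff.2 ?_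
  filter_upwards [eventually_eventually_nhds_denseInterior (eventually_generic_iff.1 hH), hF]
    with w hw hF ζ hζ
  have near : H =ᶠ[𝓝 (ζ, w)] F := by
    rw [nhds_prod_eq]
    filter_upwards [(eventually_lt_nhds hζ).prod_mk hw] with q ⟨hζ, hq⟩ using hq _ hζ
  exact (hasLineDerivAt H (ζ, w) v).unique ((hF ζ).congr_of_eventuallyEq near)

theorem dirDeriv_eventuallyEq_rowConv [CompleteSpace A] {H f : Row A} {k : SmoothKernel A}
    (hf : f ∈ rows A) (hk : k ∈ linearisedKPKernels A) (hH : H =ᶠ[generic] rowConv f k)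
    (v : ℝ × Params) :
    dirDeriv A v H =ᶠ[generic] rowConv (dirDeriv A (0, v.2) f) k
      + rowConv f (dirDeriv A (kernelShift (0, v)) k) :=
  dirDeriv_eventuallyEq_generic hH (eventually_hasLineDerivAt_rowConv hf hk v)

theorem pow_dirDeriv_eventuallyEq_rowConv [CompleteSpace A] {H f : Row A} {k : SmoothKernel A}
    (hf : f ∈ rows A) (hk : k ∈ linearisedKPKernels A) (hH : H =ᶠ[generic] rowConv f k) (n : ℕ) :
    (∂₁ ^ n) H =ᶠ[generic] rowConv f ((∂₂ ^ n) k) := by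
  have zero : dirDeriv A ((0, 0, 0, 0) : ℝ × Params) f = 0 :=
    LinearMap.congr_fun (map_zero (dirDeriv A)) f
  induction n with
  | zero => exact hH
  | succ n ih =>
    rw [pow_succ', pow_succ']
    have h := dirDeriv_eventuallyEq_rowConv hf
      (pow_dirDeriv_mem_linearisedKPKernels hk (0, 1, 0, 0) n) ih (1, 0, 0, 0)
    rwa [kernelShift_zeta, zero, rowConv_zero_left, zero_add] at h

/-- The row `f` solves `f(ζ) = h(ζ) + ∫ f(ξ) k(ξ + x, ζ + x) dξ` for `ζ < 0` and generic
parameters. -/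
structure GLMRow (k : SmoothKernel A) (f h : Row A) : Prop where
  mem_integrableRows : f ∈ integrableRows A
  eventuallyEq : f - h =ᶠ[generic] rowConv f k

namespace GLMRow

variable {k : SmoothKernel A} {f f' h h' : Row A}

theorem add (hk : k ∈ boundedKernels A) (hf : GLMRow k f h) (hf' : GLMRow k f' h') :
    GLMRow k (f + f') (h + h') where
  mem_integrableRows := add_mem hf.1 hf'.1
  eventuallyEq := by
    rw [rowConv_add_left hf.1 hf'.1 hk, add_sub_add_comm]
    exact hf.2.add hf'.2

theorem smul (c : ℝ) (hf : GLMRow k f h) : GLMRow k (c • f) (c • h) where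
  mem_integrableRows := Submodule.smul_mem _ c hf.1
  eventuallyEq := by
    rw [rowConv_smul_left, ← smul_sub]
    exact hf.2.const_smul c

theorem boundaryRow_mul (hk : k ∈ boundedKernels A) (c : Row A) (hf : GLMRow k f h) :
    GLMRow k (boundaryRow c * f) (boundaryRow c * h) where
  mem_integrableRows w := (hf.1 w).const_mul (c (0, w))
  eventuallyEq := by
    rw [rowConv_boundaryRow_mul c hf.1 hk, ← mul_sub]
    exact (EventuallyEq.refl _ _).mul hf.2

end GLMRow

theorem rowConv_sq_dirDeriv_left [CompleteSpace A] {f : Row A} {k : SmoothKernel A}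
    (hf : f ∈ rows A) (hk : k ∈ linearisedKPKernels A) :
    rowConv f ((∂₁ ^ 2) k) = boundaryRow f * kernelRow (∂₁ k) - boundaryRow (∂₁ f) * kernelRow k
      + rowConv ((∂₁ ^ 2) f) k := by
  simp only [pow_two, Module.End.mul_apply]
  rw [rowConv_dirDeriv_left hf (dirDeriv_mem_linearisedKPKernels hk _),
    rowConv_dirDeriv_left (dirDeriv_mem_rows hf _) hk]
  abel

theorem rowConv_cube_dirDeriv_left [CompleteSpace A] {f : Row A} {k : SmoothKernel A}
    (hf : f ∈ rows A) (hk : k ∈ linearisedKPKernels A) :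
    rowConv f ((∂₁ ^ 3) k) =
      boundaryRow f * kernelRow ((∂₁ ^ 2) k) - boundaryRow (∂₁ f) * kernelRow (∂₁ k)
        + boundaryRow ((∂₁ ^ 2) f) * kernelRow k - rowConv ((∂₁ ^ 3) f) k := by
  simp only [pow_succ', pow_zero, mul_one, Module.End.mul_apply]
  have h := rowConv_sq_dirDeriv_left hf (dirDeriv_mem_linearisedKPKernels hk (1, 0, 0, 0))
  simp only [pow_two, Module.End.mul_apply] at h
  rw [h, rowConv_dirDeriv_left (dirDeriv_mem_rows (dirDeriv_mem_rows hf _) _) hk]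
  abel

namespace GLMRow

variable {k : SmoothKernel A} {f h : Row A}

theorem dirDeriv_antidiagonal [CompleteSpace A] (hf : f ∈ rows A)
    (hk : k ∈ linearisedKPKernels A) (hfh : GLMRow k f h) :
    GLMRow k (δ f) (δ h + boundaryRow f * kernelRow k) where
  mem_integrableRows := mem_integrableRows_of_mem_rows (dirDeriv_mem_rows hf _)
  eventuallyEq := by
    have split : ∂₂ f = δ f + ∂₁ f := by rw [dirDeriv_antidiagonal_eq_sub, sub_add_cancel]
    have diff := dirDeriv_eventuallyEq_rowConv hf hk hfh.2 (-1, 1, 0, 0)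
    rw [kernelShift_antidiagonal, rowConv_dirDeriv_left hf hk, split,
      rowConv_add_left (mem_integrableRows_of_mem_rows (dirDeriv_mem_rows hf _))
        (mem_integrableRows_of_mem_rows (dirDeriv_mem_rows hf _))
        (mem_boundedKernels_of_mem_linearisedKPKernels hk), map_sub] at diff
    filter_upwards [diff] with q hq
    simp only [SmoothMap.sub_apply, SmoothMap.add_apply, SmoothMap.mul_apply, Pi.add_apply,
      Pi.sub_apply, Pi.mul_apply] at hq ⊢
    rw [← sub_sub, hq]
    abel

theorem dirDeriv_y [CompleteSpace A] (hf : f ∈ rows A)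
    (hk : k ∈ linearisedKPKernels A) (hfh : GLMRow k f h) :
    GLMRow k (∂₃ f + (∂₁ ^ 2) f)
      (∂₃ h + (∂₁ ^ 2) h
        + (boundaryRow f * kernelRow (∂₁ k) - boundaryRow (∂₁ f) * kernelRow k)) := by
  have hf₃ := mem_integrableRows_of_mem_rows (dirDeriv_mem_rows hf (0, 0, 1, 0))
  have hf₁ := mem_integrableRows_of_mem_rows (pow_dirDeriv_mem_rows hf (1, 0, 0, 0) 2)
  have bounded {k : SmoothKernel A} (hk : k ∈ linearisedKPKernels A) : k ∈ boundedKernels A :=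
    mem_boundedKernels_of_mem_linearisedKPKernels hk
  have dispersion : (∂₁ ^ 2) k = ∂₃ k + (∂₂ ^ 2) k :=
    sub_eq_iff_eq_add.1 (mem_linearisedKPKernels.1 hk).2.1.symm
  have parts := rowConv_sq_dirDeriv_left hf hk
  rw [dispersion, rowConv_add_right (mem_integrableRows_of_mem_rows hf)
    (bounded (dirDeriv_mem_linearisedKPKernels hk _))
    (bounded (pow_dirDeriv_mem_linearisedKPKernels hk _ 2))] at parts
  have diff₃ := dirDeriv_eventuallyEq_rowConv hf hk hfh.2 (0, 0, 1, 0)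
  have diff₁ := pow_dirDeriv_eventuallyEq_rowConv hf hk hfh.2 2
  rw [kernelShift_y, map_sub] at diff₃
  rw [map_sub] at diff₁
  refine ⟨add_mem hf₃ hf₁, ?_⟩
  rw [rowConv_add_left hf₃ hf₁ (bounded hk)]
  filter_upwards [diff₃, diff₁] with q hq₃ hq₁
  have hparts := congrFun parts q
  simp only [SmoothMap.sub_apply, SmoothMap.add_apply, SmoothMap.mul_apply, Pi.add_apply,
    Pi.sub_apply, Pi.mul_apply] at hq₃ hq₁ hparts ⊢
  linear_combination (norm := abel) hq₃ + hq₁ + hparts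

theorem dirDeriv_t [CompleteSpace A] (hf : f ∈ rows A)
    (hk : k ∈ linearisedKPKernels A) (hfh : GLMRow k f h) :
    GLMRow k (∂₄ f - (4 : ℝ) • (∂₁ ^ 3) f)
      (∂₄ h - (4 : ℝ) • (∂₁ ^ 3) h
        + (4 : ℝ) • (boundaryRow f * kernelRow ((∂₁ ^ 2) k)
          - boundaryRow (∂₁ f) * kernelRow (∂₁ k) + boundaryRow ((∂₁ ^ 2) f) * kernelRow k)) := by
  have hf₄ := mem_integrableRows_of_mem_rows (dirDeriv_mem_rows hf (0, 0, 0, 1))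
  have hf₁ := mem_integrableRows_of_mem_rows (pow_dirDeriv_mem_rows hf (1, 0, 0, 0) 3)
  have bounded {k : SmoothKernel A} (hk : k ∈ linearisedKPKernels A) : k ∈ boundedKernels A :=
    mem_boundedKernels_of_mem_linearisedKPKernels hk
  have dispersion : ∂₄ k = (4 : ℝ) • (∂₁ ^ 3) k + (4 : ℝ) • (∂₂ ^ 3) k := by
    rw [← smul_add]
    exact (mem_linearisedKPKernels.1 hk).2.2
  have parts := rowConv_cube_dirDeriv_left hf hk
  have diff₄ := dirDeriv_eventuallyEq_rowConv hf hk hfh.2 (0, 0, 0, 1)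
  have diff₁ := pow_dirDeriv_eventuallyEq_rowConv hf hk hfh.2 3
  have hk₁ := bounded (pow_dirDeriv_mem_linearisedKPKernels hk (1, 0, 0, 0) 3)
  have hk₂ := bounded (pow_dirDeriv_mem_linearisedKPKernels hk (0, 1, 0, 0) 3)
  rw [kernelShift_t, map_sub, dispersion, rowConv_add_right (mem_integrableRows_of_mem_rows hf)
    (Submodule.smul_mem _ _ hk₁) (Submodule.smul_mem _ _ hk₂), rowConv_smul_right,
    rowConv_smul_right, parts] at diff₄
  rw [map_sub] at diff₁
  refine ⟨Submodule.sub_mem _ hf₄ (Submodule.smul_mem _ _ hf₁), ?_⟩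
  rw [sub_eq_add_neg (∂₄ f), ← neg_smul, rowConv_add_left hf₄ (Submodule.smul_mem _ _ hf₁)
    (bounded hk), rowConv_smul_left]
  filter_upwards [diff₄, diff₁] with q hq₄ hq₁
  simp only [SmoothMap.sub_apply, SmoothMap.add_apply, SmoothMap.mul_apply, SmoothMap.smul_apply,
    Pi.add_apply, Pi.sub_apply, Pi.mul_apply, Pi.smul_apply] at hq₄ hq₁ ⊢
  linear_combination (norm := module) hq₄ - (4 : ℝ) • hq₁

end GLMRow

/-! ### The Lax pair -/

theorem dirDeriv_comm_apply (f : Row A) : ∂₁ (∂₂ f) = ∂₂ (∂₁ f) :=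
  LinearMap.congr_fun (commute_dirDeriv _ _).eq f

/-- The defect of the first Lax equation `∂_y r = ∂_x² r - 2 ∂_x ∂_ζ r - 2 u_x r`, where
`u = r(0; x, y, t)`. -/
noncomputable def yLaxDefect (r : Row A) : Row A :=
  ∂₃ r - (∂₂ ^ 2) r + (2 : ℝ) • ∂₂ (∂₁ r) + (2 : ℝ) • (boundaryRow (∂₂ r) * r)

/-- The defect of the second Lax equation, which gives `∂_t r`. -/
noncomputable def tLaxDefect (r : Row A) : Row A :=
  ∂₄ r - (4 : ℝ) • (∂₂ ^ 3) r + (12 : ℝ) • (∂₂ ^ 2) (∂₁ r) - (12 : ℝ) • ∂₂ ((∂₁ ^ 2) r)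
    + (12 : ℝ) • (boundaryRow (∂₂ r) * (∂₂ r - ∂₁ r))
    + (12 : ℝ) • (boundaryRow ((∂₂ ^ 2) r - ∂₂ (∂₁ r) - ∂₂ r * r) * r)

theorem dirDeriv_boundaryRow (f : Row A) (v : ℝ × Params) :
    dirDeriv A v (boundaryRow f) = boundaryRow (dirDeriv A (0, v.2) f) := by
  simp only [boundaryRow, boundary, AlgHom.comp_apply, dirDeriv_pullback]
  rfl

theorem dirDeriv_kernelRow (k : SmoothKernel A) (v : ℝ × Params) :
    dirDeriv A v (kernelRow k) = kernelRow (dirDeriv A (kernelShift (0, v)) k) :=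
  dirDeriv_pullback _ _ _

namespace GLMRow

variable {k : SmoothKernel A} {r : Row A}

theorem antidiagonal [CompleteSpace A] (hr : r ∈ rows A) (hk : k ∈ linearisedKPKernels A)
    (hrk : GLMRow k r (kernelRow k)) :
    GLMRow k (δ r) (kernelRow (∂₁ k) + boundaryRow r * kernelRow k) := by
  have h := hrk.dirDeriv_antidiagonal hr hk
  rwa [dirDeriv_kernelRow, kernelShift_antidiagonal] at h

theorem sq_antidiagonal [CompleteSpace A] (hr : r ∈ rows A) (hk : k ∈ linearisedKPKernels A)
    (hrk : GLMRow k r (kernelRow k)) :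
    GLMRow k ((δ ^ 2) r) (kernelRow ((∂₁ ^ 2) k) + boundaryRow r * kernelRow (∂₁ k)
      + boundaryRow (∂₂ r + δ r) * kernelRow k) := by
  have h := (hrk.antidiagonal hr hk).dirDeriv_antidiagonal (dirDeriv_mem_rows hr _) hk
  simp only [map_add, dirDeriv_mul, dirDeriv_boundaryRow, dirDeriv_kernelRow,
    kernelShift_antidiagonal] at h
  simp only [pow_two, Module.End.mul_apply, map_add, add_mul]
  convert h using 1
  abel

theorem cube_antidiagonal [CompleteSpace A] (hr : r ∈ rows A) (hk : k ∈ linearisedKPKernels A)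
    (hrk : GLMRow k r (kernelRow k)) :
    GLMRow k ((δ ^ 3) r) (kernelRow ((∂₁ ^ 3) k) + boundaryRow r * kernelRow ((∂₁ ^ 2) k)
      + boundaryRow (∂₂ r + ∂₂ r + δ r) * kernelRow (∂₁ k)
      + boundaryRow ((∂₂ ^ 2) r + ∂₂ (δ r) + (δ ^ 2) r) * kernelRow k) := by
  have h := (hrk.sq_antidiagonal hr hk).dirDeriv_antidiagonal (pow_dirDeriv_mem_rows hr _ 2) hk
  simp only [map_add, dirDeriv_mul, dirDeriv_boundaryRow, dirDeriv_kernelRow,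
    kernelShift_antidiagonal, pow_succ', pow_zero, mul_one, Module.End.mul_apply, add_mul] at h
  simp only [pow_succ', pow_zero, mul_one, Module.End.mul_apply, map_add, add_mul]
  convert h using 1
  abel

theorem homogeneous_yLaxDefect [CompleteSpace A] (hr : r ∈ rows A) (hk : k ∈ linearisedKPKernels A)
    (hrk : GLMRow k r (kernelRow k)) : GLMRow k (yLaxDefect r) 0 := by
  have bounded := mem_boundedKernels_of_mem_linearisedKPKernels hk
  have combination := ((hrk.dirDeriv_y hr hk).add bounded
    ((hrk.sq_antidiagonal hr hk).smul (-1))).add bounded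
    ((hrk.boundaryRow_mul bounded (∂₂ r)).smul 2)
  have dispersion := (mem_linearisedKPKernels.1 hk).2.1
  simp only [dirDeriv_kernelRow, kernelShift_zeta, kernelShift_y, pow_two, Module.End.mul_apply,
    dispersion, map_sub, map_add, add_mul, sub_mul, dirDeriv_antidiagonal_eq_sub,
    dirDeriv_comm_apply] at combination
  convert combination using 1
  · simp only [yLaxDefect, pow_two, Module.End.mul_apply]
    module
  · module

theorem homogeneous_tLaxDefect [CompleteSpace A] (hr : r ∈ rows A) (hk : k ∈ linearisedKPKernels A)
    (hrk : GLMRow k r (kernelRow k)) : GLMRow k (tLaxDefect r) 0 := by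
  have bounded := mem_boundedKernels_of_mem_linearisedKPKernels hk
  have combination := (((hrk.dirDeriv_t hr hk).add bounded
    ((hrk.cube_antidiagonal hr hk).smul (-4))).add bounded
    (((hrk.antidiagonal hr hk).boundaryRow_mul bounded (∂₂ r)).smul 12)).add bounded
    ((hrk.boundaryRow_mul bounded ((∂₂ ^ 2) r - ∂₂ (∂₁ r) - ∂₂ r * r)).smul 12)
  have dispersion := (mem_linearisedKPKernels.1 hk).2.2
  simp only [dirDeriv_kernelRow, kernelShift_zeta, kernelShift_t, pow_succ', pow_zero, mul_one,
    Module.End.mul_apply, map_sub, map_add, map_mul, add_mul, sub_mul, mul_add, mul_assoc,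
    dirDeriv_antidiagonal_eq_sub, dirDeriv_comm_apply] at combination dispersion
  simp only [dispersion, map_smul, map_add] at combination
  convert combination using 1
  · simp only [tLaxDefect, pow_succ', pow_zero, mul_one, Module.End.mul_apply, map_sub, map_mul,
      sub_mul, mul_sub, mul_assoc]
    module
  · module

end GLMRow

/-! ### Uniqueness -/

theorem integral_mul_kernel_eq_zero {X : Type*} [TopologicalSpace X] [SecondCountableTopology X]
    [MeasurableSpace X] [OpensMeasurableSpace X] {μ : Measure X} [SFinite μ] {h G : X → A}
    {K : X → X → A} {C : ℝ} {ζ : X} (hh : Integrable h μ) (hG : Integrable G μ)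
    (hK : Continuous (Function.uncurry K)) (hKC : ∀ ξ η, ‖K ξ η‖ ≤ C)
    (homogeneous : ∀ᵐ η ∂μ, h η = ∫ ξ, h ξ * K ξ η ∂μ)
    (mirror : ∀ᵐ ξ ∂μ, K ξ ζ = G ξ - ∫ η, K ξ η * G η ∂μ) :
    ∫ ξ, h ξ * K ξ ζ ∂μ = 0 := by
  have integrable_hK (η : X) : Integrable (fun ξ => h ξ * K ξ η) μ :=
    hh.norm.mul_const C |>.mono' (hh.1.mul (hK.uncurry_right η).aestronglyMeasurable)
      (.of_forall fun ξ => norm_mul_le_of_le le_rfl (hKC ξ η))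
  have integrable_KG (ξ : X) : Integrable (fun η => K ξ η * G η) μ :=
    hG.norm.const_mul C |>.mono' ((hK.uncurry_left ξ).aestronglyMeasurable.mul hG.1)
      (.of_forall fun η => norm_mul_le_of_le (hKC ξ η) le_rfl)
  have integrable_hKG : Integrable (fun q : X × X => h q.1 * (K q.1 q.2 * G q.2)) (μ.prod μ) :=
    hh.norm.mul_prod (hG.norm.const_mul C) |>.mono'
      (hh.1.comp_fst.mul (hK.aestronglyMeasurable.mul hG.1.comp_snd))
      (.of_forall fun q => norm_mul_le_of_le le_rfl (norm_mul_le_of_le (hKC q.1 q.2) le_rfl))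
  have fubini : ∫ ξ, h ξ * ∫ η, K ξ η * G η ∂μ ∂μ = ∫ η, h η * G η ∂μ :=
    calc ∫ ξ, h ξ * ∫ η, K ξ η * G η ∂μ ∂μ
        = ∫ ξ, ∫ η, h ξ * (K ξ η * G η) ∂μ ∂μ := by
          simp only [integral_const_mul_of_integrable (integrable_KG _)]
      _ = ∫ η, ∫ ξ, h ξ * (K ξ η * G η) ∂μ ∂μ := integral_integral_swap integrable_hKG
      _ = ∫ η, h η * G η ∂μ := integral_congr_ae <| by
          filter_upwards [homogeneous] with η hη
          simp only [← mul_assoc]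
          rw [integral_mul_const_of_integrable (integrable_hK η), ← hη]
  have iterated := integrable_hKG.integral_prod_left
  simp only [integral_const_mul_of_integrable (integrable_KG _)] at iterated
  have expand : (fun ξ => h ξ * G ξ) =ᵐ[μ] fun ξ => h ξ * K ξ ζ + h ξ * ∫ η, K ξ η * G η ∂μ := by
    filter_upwards [mirror] with ξ hξ
    rw [← mul_add, hξ, sub_add_cancel]
  rw [integral_congr_ae expand, integral_add (integrable_hK ζ) iterated] at fubini
  exact right_eq_add.1 fubini

/-- `g(z, ζ; x, y, t)` solves the Gelfand–Levitan–Marchenko equation with kernel `k` and its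
mirror version. Besides the integrability that makes sense of the second equation, all derivatives
of the row `g(0, ·)` are required to be integrable. -/
structure IsGLMSolution (k : SmoothKernel A) (g : SmoothMap (ℝ × ℝ × Params) A) : Prop where
  row_mem_rows : pullback (.inr ℝ ℝ (ℝ × Params)) g ∈ rows A
  integrableOn_column : ∀ q, IntegrableOn (fun z => g (z, q)) (Iic 0)
  equation : ∀ z ≤ 0, ∀ ζ ≤ 0, ∀ w, k (kernelShift (z, ζ, w)) =
    g (z, ζ, w) - ∫ ξ in Iic 0, g (z, ξ, w) * k (kernelShift (ξ, ζ, w))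
  mirror : ∀ z ≤ 0, ∀ ζ ≤ 0, ∀ w, k (kernelShift (z, ζ, w)) =
    g (z, ζ, w) - ∫ ξ in Iic 0, k (kernelShift (z, ξ, w)) * g (ξ, ζ, w)

variable {k : SmoothKernel A} {g : SmoothMap (ℝ × ℝ × Params) A} {f : Row A}

theorem IsGLMSolution.glmRow (hg : IsGLMSolution k g) :
    GLMRow k (pullback (.inr ℝ ℝ (ℝ × Params)) g) (kernelRow k) where
  mem_integrableRows := mem_integrableRows_of_mem_rows hg.row_mem_rows
  eventuallyEq := eventually_generic_iff.2 <| .of_forall fun w ζ hζ =>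
    sub_eq_iff_comm.1 (hg.equation 0 le_rfl ζ hζ.le w).symm

theorem GLMRow.eq_zero (hg : IsGLMSolution k g) (hk : k ∈ boundedKernels A)
    (hf : GLMRow k f 0) {ζ : ℝ} (hζ : ζ ≤ 0) (w : Params) : f (ζ, w) = 0 := by
  have interior {ζ : ℝ} (hζ : ζ < 0) (w : Params) : f (ζ, w) = 0 := by
    refine congrFun (eq_of_eventuallyEq_denseInterior (F := fun w => f (ζ, w)) (G := fun _ => 0)
      (by fun_prop) continuous_const ?_) w
    filter_upwards [eventually_generic_iff.1 hf.eventuallyEq] with w hw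
    have homogeneous {ζ : ℝ} (hζ : ζ < 0) :
        f (ζ, w) = ∫ ξ in Iic 0, f (ξ, w) * k (kernelShift (ξ, ζ, w)) :=
      (sub_zero _).symm.trans (hw ζ hζ)
    obtain ⟨C, hC⟩ := hk w.2
    rw [homogeneous hζ]
    refine integral_mul_kernel_eq_zero (K := fun ξ η => k (kernelShift (ξ, η, w)))
      (hf.mem_integrableRows w) (hg.integrableOn_column (ζ, w))
      (by simp only [Function.uncurry_def]; fun_prop) (fun ξ η => hC _ _) ?_ ?_
    · have negative : ∀ᵐ η ∂volume.restrict (Iic (0 : ℝ)), η < 0 := by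
        rw [← Measure.restrict_congr_set Iio_ae_eq_Iic]
        exact ae_restrict_mem measurableSet_Iio
      filter_upwards [negative] with η hη using homogeneous hη
    · filter_upwards [ae_restrict_mem measurableSet_Iic] with ξ hξ using hg.mirror ξ hξ ζ hζ.le w
  have closed : IsClosed {ζ | f (ζ, w) = 0} := isClosed_eq (by fun_prop) continuous_const
  exact closed.closure_subset_iff.2 (fun ζ hζ => interior hζ w) (closure_Iio (0 : ℝ) ▸ hζ)

theorem boundary_dirDeriv_eq_zero (hf : ∀ ζ ≤ 0, ∀ w, f (ζ, w) = 0) :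
    boundary (∂₁ f) = 0 := by
  ext w
  have line (ζ : ℝ) : (0, w) + ζ • ((1, 0) : ℝ × Params) = (ζ, w) := by simp
  have deriv := (hasDerivAt_line f (0, w) (1, 0) 0).hasDerivWithinAt (s := Iic 0)
  simp only [line] at deriv
  exact (uniqueDiffWithinAt_Iic 0).eq_deriv _ deriv
    ((hasDerivWithinAt_const 0 _ 0).congr (fun ζ hζ => hf ζ hζ w) (hf 0 le_rfl w))

/-! ### The potential KP equation -/

local notation "∂x" => dirDeriv A ((1, 0, 0) : Params)
local notation "∂y" => dirDeriv A ((0, 1, 0) : Params)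
local notation "∂t" => dirDeriv A ((0, 0, 1) : Params)

theorem boundary_dirDeriv (v : Params) (f : Row A) :
    boundary (dirDeriv A (0, v) f) = dirDeriv A v (boundary f) :=
  (dirDeriv_pullback _ v f).symm

theorem boundary_boundaryRow (f : Row A) : boundary (boundaryRow f) = boundary f := rfl

theorem boundary_yLaxDefect (r : Row A) :
    boundary (yLaxDefect r) =
      ∂y (boundary r) - (∂x ^ 2) (boundary r) + (2 : ℝ) • ∂x (boundary (∂₁ r))
        + (2 : ℝ) • (∂x (boundary r) * boundary r) := by
  simp only [yLaxDefect, map_add, map_sub, map_smul, map_mul, pow_two, Module.End.mul_apply,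
    boundary_dirDeriv, boundary_boundaryRow]

theorem boundary_dirDeriv_yLaxDefect (r : Row A) :
    boundary (∂₁ (yLaxDefect r)) =
      ∂y (boundary (∂₁ r)) - (∂x ^ 2) (boundary (∂₁ r)) + (2 : ℝ) • ∂x (boundary ((∂₁ ^ 2) r))
        + (2 : ℝ) • (∂x (boundary r) * boundary (∂₁ r)) := by
  have comm (v : Params) (f : Row A) : ∂₁ (dirDeriv A (0, v) f) = dirDeriv A (0, v) (∂₁ f) :=
    LinearMap.congr_fun (commute_dirDeriv _ _).eq f
  have const : dirDeriv A ((0, 0, 0, 0) : ℝ × Params) = 0 := map_zero (dirDeriv A)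
  simp only [yLaxDefect, map_add, map_sub, map_smul, map_mul, pow_two, Module.End.mul_apply,
    comm, dirDeriv_mul, dirDeriv_boundaryRow, const, LinearMap.zero_apply, map_zero, zero_mul,
    zero_add, boundary_dirDeriv, boundary_boundaryRow]

theorem boundary_tLaxDefect (r : Row A) :
    boundary (tLaxDefect r) =
      ∂t (boundary r) - (4 : ℝ) • (∂x ^ 3) (boundary r)
        + (12 : ℝ) • (∂x ^ 2) (boundary (∂₁ r)) - (12 : ℝ) • ∂x (boundary ((∂₁ ^ 2) r))
        + (12 : ℝ) • (∂x (boundary r) * (∂x (boundary r) - boundary (∂₁ r)))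
        + (12 : ℝ) • (((∂x ^ 2) (boundary r) - ∂x (boundary (∂₁ r))
            - ∂x (boundary r) * boundary r) * boundary r) := by
  simp only [tLaxDefect, map_add, map_sub, map_smul, map_mul, pow_succ', pow_zero, mul_one,
    Module.End.mul_apply, boundary_dirDeriv, boundary_boundaryRow]

theorem dirDeriv_x_potentialKP_of_boundary_system {u a b : SmoothMap Params A}
    (hu : ∂y u - (∂x ^ 2) u + (2 : ℝ) • ∂x a + (2 : ℝ) • (∂x u * u) = 0)
    (ha : ∂y a - (∂x ^ 2) a + (2 : ℝ) • ∂x b + (2 : ℝ) • (∂x u * a) = 0)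
    (ht : ∂t u - (4 : ℝ) • (∂x ^ 3) u + (12 : ℝ) • (∂x ^ 2) a - (12 : ℝ) • ∂x b
      + (12 : ℝ) • (∂x u * (∂x u - a)) + (12 : ℝ) • (((∂x ^ 2) u - ∂x a - ∂x u * u) * u) = 0) :
    ∂x (∂t u - (∂x ^ 3) u + (6 : ℝ) • (∂x u * ∂x u)) =
      (3 : ℝ) • (∂y ^ 2) u - (6 : ℝ) • (∂y u * ∂x u - ∂x u * ∂y u) := by
  have comm (f : SmoothMap Params A) : ∂y (∂x f) = ∂x (∂y f) :=
    LinearMap.congr_fun (commute_dirDeriv _ _).eq f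
  have hu_y := congrArg (fun e => ∂y e) hu
  have hu_xx := congrArg (fun e => ∂x (∂x e)) hu
  have hu_mul_x := congrArg (fun e => ∂x (e * u)) hu
  have ha_x := congrArg (fun e => ∂x e) ha
  have ht_x := congrArg (fun e => ∂x e) ht
  simp only [map_add, map_sub, map_smul, map_zero, zero_mul, pow_succ', pow_zero, mul_one,
    Module.End.mul_apply, dirDeriv_mul, add_mul, sub_mul, mul_sub, mul_add, smul_mul_assoc, comm,
    mul_assoc] at hu_y hu_xx hu_mul_x ha_x ht_x ⊢
  linear_combination (norm := module) ht_x + (6 : ℝ) • ha_x - (3 : ℝ) • hu_y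
    - (3 : ℝ) • hu_xx + (6 : ℝ) • hu_mul_x

variable (A) in
/-- The mixed derivative `∂x^c ∂y^d ∂t^e`. -/
noncomputable def paramDeriv (c d e : ℕ) : Module.End ℝ (SmoothMap Params A) :=
  ∂x ^ c * (∂y ^ d * ∂t ^ e)

variable (A) in
/-- Functions of `(x, y, t)` that are integrable in `x` over every half-line `(-∞, a]`. -/
def halfLineIntegrable : Submodule ℝ (SmoothMap Params A) where
  carrier := {f | ∀ a w, IntegrableOn (fun x => f (x, w)) (Iic a) volume}
  add_mem' hf hg a w := (hf a w).add (hg a w)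
  zero_mem' _ _ := integrableOn_zero
  smul_mem' c _ hf a w := (hf a w).fun_smul c

theorem integral_dirDeriv_x [CompleteSpace A] {f : SmoothMap Params A}
    (hf : f ∈ halfLineIntegrable A) (hf' : ∂x f ∈ halfLineIntegrable A) (x : ℝ) (w : ℝ × ℝ) :
    ∫ s in Iic x, ∂x f (s, w) = f (x, w) := by
  have deriv (s : ℝ) : HasDerivAt (fun s => f (s, w)) (∂x f (s, w)) s := by
    simpa [show ((0, 0) : ℝ × ℝ) = 0 from rfl] using hasDerivAt_line f (0, w) (1, 0, 0) s
  simpa using integral_Iic_of_hasDerivAt_of_tendsto' (fun s _ => deriv s) (hf' x w)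
    (tendsto_zero_of_hasDerivAt_of_integrableOn_Iic (fun s _ => deriv s) (hf' x w) (hf x w))

theorem norm_le_integral_dirDeriv_x [CompleteSpace A] {f : SmoothMap Params A}
    (hf : f ∈ halfLineIntegrable A) (hf' : ∂x f ∈ halfLineIntegrable A) {x a : ℝ} (hx : x ≤ a)
    (w : ℝ × ℝ) : ‖f (x, w)‖ ≤ ∫ s in Iic a, ‖∂x f (s, w)‖ := by
  rw [← integral_dirDeriv_x hf hf']
  exact (norm_integral_le_integral_norm _).trans <| setIntegral_mono_set (hf' a w).norm
    (.of_forall fun _ => norm_nonneg _) (Iic_subset_Iic.2 hx).eventuallyLE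

theorem mul_mem_halfLineIntegrable [CompleteSpace A] {f g : SmoothMap Params A}
    (hf : f ∈ halfLineIntegrable A) (hf' : ∂x f ∈ halfLineIntegrable A)
    (hg : g ∈ halfLineIntegrable A) : f * g ∈ halfLineIntegrable A := fun a w =>
  (hg a w).bdd_mul (by fun_prop) <| by
    filter_upwards [ae_restrict_mem measurableSet_Iic] with x hx
    exact norm_le_integral_dirDeriv_x hf hf' hx w

theorem commutator_mem_halfLineIntegrable [CompleteSpace A] {u : SmoothMap Params A}
    (hu : ∀ c d e, paramDeriv A c d e u ∈ halfLineIntegrable A) :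
    ∂y u * ∂x u - ∂x u * ∂y u ∈ halfLineIntegrable A := by
  have hx : ∂x u ∈ halfLineIntegrable A := by simpa [paramDeriv] using hu 1 0 0
  have hxx : ∂x (∂x u) ∈ halfLineIntegrable A := by simpa [paramDeriv, pow_two] using hu 2 0 0
  have hy : ∂y u ∈ halfLineIntegrable A := by simpa [paramDeriv] using hu 0 1 0
  have hxy : ∂x (∂y u) ∈ halfLineIntegrable A := by simpa [paramDeriv] using hu 1 1 0
  exact sub_mem (mul_mem_halfLineIntegrable hy hxy hx) (mul_mem_halfLineIntegrable hx hxx hy)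

theorem integral_potentialKP [CompleteSpace A] {u : SmoothMap Params A}
    (hu : ∀ c d e, paramDeriv A c d e u ∈ halfLineIntegrable A)
    (hKP : ∂x (∂t u - (∂x ^ 3) u + (6 : ℝ) • (∂x u * ∂x u)) =
      (3 : ℝ) • (∂y ^ 2) u - (6 : ℝ) • (∂y u * ∂x u - ∂x u * ∂y u)) (x : ℝ) (w : ℝ × ℝ) :
    ∂t u (x, w) - (∂x ^ 3) u (x, w) + (6 : ℝ) • (∂x u (x, w) * ∂x u (x, w)) =
      (3 : ℝ) • (∫ s in Iic x, (∂y ^ 2) u (s, w))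
        - (6 : ℝ) • ∫ s in Iic x, (∂y u (s, w) * ∂x u (s, w) - ∂x u (s, w) * ∂y u (s, w)) := by
  have hx : ∂x u ∈ halfLineIntegrable A := by simpa [paramDeriv] using hu 1 0 0
  have hxx : ∂x (∂x u) ∈ halfLineIntegrable A := by simpa [paramDeriv, pow_two] using hu 2 0 0
  have hxxx : (∂x ^ 3) u ∈ halfLineIntegrable A := by simpa [paramDeriv] using hu 3 0 0
  have hyy : (∂y ^ 2) u ∈ halfLineIntegrable A := by simpa [paramDeriv] using hu 0 2 0
  have ht : ∂t u ∈ halfLineIntegrable A := by simpa [paramDeriv] using hu 0 0 1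
  have hcomm := commutator_mem_halfLineIntegrable hu
  have hflux : ∂t u - (∂x ^ 3) u + (6 : ℝ) • (∂x u * ∂x u) ∈ halfLineIntegrable A :=
    add_mem (sub_mem ht hxxx) (Submodule.smul_mem _ _ (mul_mem_halfLineIntegrable hx hxx hx))
  have hflux_x := hKP ▸ sub_mem (Submodule.smul_mem _ (3 : ℝ) hyy) (Submodule.smul_mem _ 6 hcomm)
  refine (integral_dirDeriv_x hflux hflux_x x w).symm.trans ?_
  rw [hKP, ← integral_smul, ← integral_smul]
  exact integral_sub ((hyy x w).fun_smul (3 : ℝ)) ((hcomm x w).fun_smul (6 : ℝ))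

theorem IsGLMSolution.dirDeriv_x_potentialKP [CompleteSpace A] {k : SmoothKernel A}
    {g : SmoothMap (ℝ × ℝ × Params) A} (hg : IsGLMSolution k g) (hk : k ∈ linearisedKPKernels A)
    {u : SmoothMap Params A} (hug : ∀ w, u w = g (0, 0, w)) :
    ∂x (∂t u - (∂x ^ 3) u + (6 : ℝ) • (∂x u * ∂x u)) =
      (3 : ℝ) • (∂y ^ 2) u - (6 : ℝ) • (∂y u * ∂x u - ∂x u * ∂y u) := by
  set r : Row A := pullback (.inr ℝ ℝ (ℝ × Params)) g
  obtain rfl : boundary r = u := by ext w; exact (hug w).symm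
  have unique {f : Row A} (hf : GLMRow k f 0) : ∀ ζ ≤ 0, ∀ w, f (ζ, w) = 0 := fun ζ hζ w =>
    hf.eq_zero hg (mem_boundedKernels_of_mem_linearisedKPKernels hk) hζ w
  have hy := unique (hg.glmRow.homogeneous_yLaxDefect hg.row_mem_rows hk)
  have ht := unique (hg.glmRow.homogeneous_tLaxDefect hg.row_mem_rows hk)
  apply dirDeriv_x_potentialKP_of_boundary_system
  · rw [← boundary_yLaxDefect]
    exact SmoothMap.ext (hy 0 le_rfl)
  · rw [← boundary_dirDeriv_yLaxDefect]
    exact boundary_dirDeriv_eq_zero hy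
  · rw [← boundary_tLaxDefect]
    exact SmoothMap.ext (ht 0 le_rfl)

theorem direct_linearisation_KP_general [CompleteSpace A] {k : SmoothKernel A}
    (hk : k ∈ linearisedKPKernels A) {g : SmoothMap (ℝ × ℝ × Params) A} (hg : IsGLMSolution k g)
    {u : SmoothMap Params A} (hug : ∀ w, u w = g (0, 0, w))
    (hu : ∀ c d e, paramDeriv A c d e u ∈ halfLineIntegrable A) (x : ℝ) (w : ℝ × ℝ) :
    ∫ s in Iic x, (∂y ^ 2) u (s, w) =
      (1 / 3 : ℝ) • (∂t u (x, w) - (∂x ^ 3) u (x, w)) + (2 : ℝ) • (∂x u (x, w) * ∂x u (x, w))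
        + (2 : ℝ) • ∫ s in Iic x, (∂y u (s, w) * ∂x u (s, w) - ∂x u (s, w) * ∂y u (s, w)) := by
  have integrated := integral_potentialKP hu (hg.dirDeriv_x_potentialKP hk hug) x w
  linear_combination (norm := module) (-1 / 3 : ℝ) • integrated

end RowConvolution

/-! ### Matrices -/

section Matrices

open scoped Matrix.Norms.L2Operator

variable {m : ℕ} {V : Type*} [NormedAddCommGroup V] [NormedSpace ℝ V]

/-- Evaluation of an entry, as a continuous linear map. -/
noncomputable def entry (i j : Fin m) : Mat m →L[ℝ] ℂ :=
  (Matrix.entryLinearMap ℝ ℂ i j).toContinuousLinearMap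

/-- Matrices with the operator norm are linearly homeomorphic to arrays with the sup norm. -/
noncomputable def arrayEquiv : (Fin m → Fin m → ℂ) ≃L[ℝ] Mat m :=
  (Matrix.ofLinearEquiv ℝ).toContinuousLinearEquiv

/-- A matrix-valued function with smooth entries, as a smooth map. -/
noncomputable def smoothMapOfEntries (F : V → Mat m)
    (hF : ∀ i j, ContDiff ℝ ∞ fun v => F v i j) : SmoothMap V (Mat m) :=
  ⟨F, arrayEquiv.contDiff.comp (contDiff_pi.2 fun i => contDiff_pi.2 (hF i))⟩

theorem integrable_of_entries {α : Type*} [MeasurableSpace α] {μ : Measure α} {F : α → Mat m}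
    (hF : ∀ i j, Integrable (fun a => F a i j) μ) : Integrable F μ :=
  arrayEquiv.integrable_comp_iff.2 (Integrable.of_eval fun i => Integrable.of_eval (hF i))

theorem of_integral_entries {α : Type*} [MeasurableSpace α] {μ : Measure α} {F : α → Mat m}
    (hF : Integrable F μ) : Matrix.of (fun i j => ∫ a, F a i j ∂μ) = ∫ a, F a ∂μ := by
  ext i j
  exact (entry i j).integral_comp_comm hF

theorem exists_norm_le_of_entries {α : Type*} {F : α → Mat m}
    (hF : ∃ C, ∀ a i j, ‖F a i j‖ ≤ C) : ∃ C, ∀ a, ‖F a‖ ≤ C := by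
  obtain ⟨C, hC⟩ := hF
  let L : (Fin m → Fin m → ℂ) →L[ℝ] Mat m := arrayEquiv.toContinuousLinearMap
  have bound (a : α) : ‖arrayEquiv.symm (F a)‖ ≤ max C 0 := by
    have nonneg := le_max_right C 0
    exact (pi_norm_le_iff_of_nonneg nonneg).2 fun i =>
      (pi_norm_le_iff_of_nonneg nonneg).2 fun j => (hC a i j).trans (le_max_left C 0)
  refine ⟨‖L‖ * max C 0, fun a => ?_⟩
  simpa [L] using L.le_opNorm_of_le (bound a)

theorem iteratedDeriv_entry_line (f : SmoothMap V (Mat m)) (w v : V) (n : ℕ) (i j : Fin m) :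
    iteratedDeriv n (fun s : ℝ => f (w + s • v) i j) =
      fun s => (dirDeriv (Mat m) v ^ n) f (w + s • v) i j := by
  induction n with
  | zero => simp
  | succ n ih =>
    rw [iteratedDeriv_succ, ih, pow_succ']
    ext s
    exact ((entry i j).hasFDerivAt.comp_hasDerivAt s (hasDerivAt_line _ w v s)).deriv

theorem D3_eq_paramDeriv (u : SmoothMap Params (Mat m)) (c d e : ℕ) (x y t : ℝ) :
    D3 c d e (fun x y t => u (x, y, t)) x y t = paramDeriv (Mat m) c d e u (x, y, t) := by
  ext i j
  have deriv_x (f : SmoothMap Params (Mat m)) (y t : ℝ) :=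
    iteratedDeriv_entry_line f (0, y, t) (1, 0, 0) c i j
  have deriv_y (f : SmoothMap Params (Mat m)) (x t : ℝ) :=
    iteratedDeriv_entry_line f (x, 0, t) (0, 1, 0) d i j
  have deriv_t (x y : ℝ) := iteratedDeriv_entry_line u (x, y, 0) (0, 0, 1) e i j
  simp only [Prod.smul_mk, Prod.mk_add_mk, smul_eq_mul, mul_one, mul_zero, add_zero, zero_add]
    at deriv_x deriv_y deriv_t
  simp only [D3, Matrix.of_apply, deriv_x, deriv_y, deriv_t]
  rfl

theorem iteratedDeriv_eq_mixedDeriv (f : SmoothMap (ℝ × ℝ × ℝ × ℝ) (Mat m)) (a b c d : ℕ)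
    (w₁ w₂ w₃ w₄ : ℝ) (i j : Fin m) :
    iteratedDeriv a (fun s₁ => iteratedDeriv b (fun s₂ => iteratedDeriv c (fun s₃ =>
      iteratedDeriv d (fun s₄ => f (s₁, s₂, s₃, s₄) i j) w₄) w₃) w₂) w₁ =
      mixedDeriv (Mat m) a b c d f (w₁, w₂, w₃, w₄) i j := by
  have deriv₁ (f : SmoothMap (ℝ × ℝ × ℝ × ℝ) (Mat m)) :=
    iteratedDeriv_entry_line f (0, w₂, w₃, w₄) (1, 0, 0, 0) a i j
  have deriv₂ (f : SmoothMap (ℝ × ℝ × ℝ × ℝ) (Mat m)) (s₁ : ℝ) :=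
    iteratedDeriv_entry_line f (s₁, 0, w₃, w₄) (0, 1, 0, 0) b i j
  have deriv₃ (f : SmoothMap (ℝ × ℝ × ℝ × ℝ) (Mat m)) (s₁ s₂ : ℝ) :=
    iteratedDeriv_entry_line f (s₁, s₂, 0, w₄) (0, 0, 1, 0) c i j
  have deriv₄ (s₁ s₂ s₃ : ℝ) :=
    iteratedDeriv_entry_line f (s₁, s₂, s₃, 0) (0, 0, 0, 1) d i j
  simp only [Prod.smul_mk, Prod.mk_add_mk, smul_eq_mul, mul_one, mul_zero, add_zero, zero_add]
    at deriv₁ deriv₂ deriv₃ deriv₄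
  simp only [deriv₁, deriv₂, deriv₃, deriv₄]
  rfl

theorem pder4_eq_mixedDeriv (k : SmoothKernel (Mat m)) (a b : ℕ) (z ζ y t : ℝ) :
    pder4 a b (fun z ζ y t => k (z, ζ, y, t)) z ζ y t = mixedDeriv (Mat m) a b 0 0 k (z, ζ, y, t) :=
  Matrix.ext fun i j => iteratedDeriv_eq_mixedDeriv k a b 0 0 z ζ y t i j

theorem mem_linearisedKPKernels_of_entries {k : SmoothKernel (Mat m)}
    (hk : IsScattering4 fun z ζ y t => k (z, ζ, y, t))
    (hKP : LinearisedKP fun z ζ y t => k (z, ζ, y, t)) : k ∈ linearisedKPKernels (Mat m) := by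
  refine mem_linearisedKPKernels.2 ⟨fun a b w => ?_, ?_, ?_⟩
  · obtain ⟨C, hC⟩ := (hk.2 a b w.1 w.2).1
    simp only [pder4_eq_mixedDeriv] at hC
    obtain ⟨C', hC'⟩ := exists_norm_le_of_entries
      (F := fun q : ℝ × ℝ => mixedDeriv (Mat m) a b 0 0 k (q.1, q.2, w)) ⟨C, fun q => hC q.1 q.2⟩
    exact ⟨C', fun z ζ => by simpa [mixedDeriv] using hC' (z, ζ)⟩
  · ext ⟨z, ζ, y, t⟩ i j
    have h := iteratedDeriv_eq_mixedDeriv k 0 0 1 0 z ζ y t i j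
    simp only [iteratedDeriv_zero, iteratedDeriv_one] at h
    rw [hKP.1] at h
    simpa [pder4_eq_mixedDeriv, mixedDeriv] using h.symm
  · ext ⟨z, ζ, y, t⟩ i j
    have h := iteratedDeriv_eq_mixedDeriv k 0 0 0 1 z ζ y t i j
    simp only [iteratedDeriv_zero, iteratedDeriv_one] at h
    rw [hKP.2] at h
    simpa [pder4_eq_mixedDeriv, mixedDeriv, mul_add] using h.symm

theorem isGLMSolution_of_entries {k : SmoothKernel (Mat m)}
    (hk : ∀ y t, ∃ C, ∀ z ζ i j, ‖k (z, ζ, y, t) i j‖ ≤ C)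
    {g : SmoothMap (ℝ × ℝ × Params) (Mat m)}
    (hg : ∀ a b c d e x y t, KernelDecay fun z ζ =>
      D5 a b c d e (fun z ζ x y t => g (z, ζ, x, y, t)) z ζ x y t)
    (equation : ∀ x y t, ∀ z ∈ Iic (0 : ℝ), ∀ ζ ∈ Iic (0 : ℝ), k (z + x, ζ + x, y, t) =
      g (z, ζ, x, y, t) - Matrix.of fun i j =>
        ∫ ξ in Iic 0, (g (z, ξ, x, y, t) * k (ξ + x, ζ + x, y, t)) i j)
    (mirror : ∀ x y t, ∀ z ∈ Iic (0 : ℝ), ∀ ζ ∈ Iic (0 : ℝ), k (z + x, ζ + x, y, t) =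
      g (z, ζ, x, y, t) - Matrix.of fun i j =>
        ∫ ξ in Iic 0, (k (z + x, ξ + x, y, t) * g (ξ, ζ, x, y, t)) i j) :
    IsGLMSolution k g := by
  have integrable_row (z : ℝ) (w : Params) : IntegrableOn (fun ξ => g (z, ξ, w)) (Iic 0) :=
    integrable_of_entries ((hg 0 0 0 0 0 w.1 w.2.1 w.2.2).2.2.1 z)
  have integrable_column (q : ℝ × Params) : IntegrableOn (fun z => g (z, q)) (Iic 0) :=
    integrable_of_entries ((hg 0 0 0 0 0 q.2.1 q.2.2.1 q.2.2.2).2.1 q.1)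
  have bounded (w : ℝ × ℝ) : ∃ C, ∀ q : ℝ × ℝ, ‖k (q.1, q.2, w)‖ ≤ C :=
    exists_norm_le_of_entries ((hk w.1 w.2).imp fun C hC q => hC q.1 q.2)
  refine ⟨mem_rows.2 fun b c d e ⟨x, y, t⟩ => integrable_of_entries fun i j => ?_,
    integrable_column, fun z hz ζ hζ w => ?_, fun z hz ζ hζ w => ?_⟩
  · simp only [← iteratedDeriv_eq_mixedDeriv]
    exact (hg 0 b c d e x y t).2.2.1 0 i j
  · obtain ⟨C, hC⟩ := bounded w.2
    have integrable : IntegrableOn (fun ξ => g (z, ξ, w) * k (kernelShift (ξ, ζ, w))) (Iic 0) :=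
      (integrable_row z w).mul_bdd (by fun_prop) (.of_forall fun ξ => hC (_, _))
    rw [← of_integral_entries integrable]
    exact equation w.1 w.2.1 w.2.2 z hz ζ hζ
  · obtain ⟨C, hC⟩ := bounded w.2
    have integrable : IntegrableOn (fun ξ => k (kernelShift (z, ξ, w)) * g (ξ, ζ, w)) (Iic 0) :=
      (integrable_column (ζ, w)).bdd_mul (by fun_prop) (.of_forall fun ξ => hC (_, _))
    rw [← of_integral_entries integrable]
    exact mirror w.1 w.2.1 w.2.2 z hz ζ hζ

theorem potentialKP_of_entries {k : SmoothKernel (Mat m)} (hk : k ∈ linearisedKPKernels (Mat m))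
    {g : SmoothMap (ℝ × ℝ × Params) (Mat m)} (hg : IsGLMSolution k g)
    {u : ℝ → ℝ → ℝ → Mat m} (hug : ∀ x y t, u x y t = g (0, 0, x, y, t))
    (hu : ∀ c d e y t i j a, IntegrableOn (fun x => D3 c d e u x y t i j) (Iic a)) (x y t : ℝ) :
    (Matrix.of (fun i j => ∫ x' in Iic x, D3 0 2 0 u x' y t i j) : Mat m) =
      ((1 : ℂ) / 3) • (D3 0 0 1 u x y t - D3 3 0 0 u x y t)
        + (2 : ℕ) • (D3 1 0 0 u x y t * D3 1 0 0 u x y t)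
        + (2 : ℕ) • (Matrix.of (fun i j => ∫ x' in Iic x,
          (D3 0 1 0 u x' y t * D3 1 0 0 u x' y t
            - D3 1 0 0 u x' y t * D3 0 1 0 u x' y t) i j) : Mat m) := by
  let v : SmoothMap Params (Mat m) := boundary (pullback (.inr ℝ ℝ (ℝ × Params)) g)
  obtain rfl : u = fun x y t => v (x, y, t) := by ext1 x; ext1 y; ext1 t; exact hug x y t
  simp only [D3_eq_paramDeriv] at hu ⊢
  have hv (c d e : ℕ) : paramDeriv (Mat m) c d e v ∈ halfLineIntegrable (Mat m) := fun a w =>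
    integrable_of_entries fun i j => hu c d e w.1 w.2 i j a
  have commutator := of_integral_entries (commutator_mem_halfLineIntegrable hv x (y, t))
  have potentialKP := direct_linearisation_KP_general hk hg (fun _ => rfl) hv x (y, t)
  have real_third : (1 : ℂ) / 3 = (1 / 3 : ℝ) := by norm_num
  have second_y := of_integral_entries (hv 0 2 0 x (y, t))
  rw [second_y, real_third, Complex.coe_smul]
  simp only [paramDeriv, pow_zero, pow_one, one_mul, mul_one, two_smul, SmoothMap.sub_apply,
    SmoothMap.mul_apply] at commutator potentialKP ⊢
  rw [commutator, potentialKP]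

end Matrices

end NCKP

namespace NCKP
/-- **Theorem 1: direct linearisation of the non-commutative KP equation.**
If `p` is a scattering function satisfying the linearised KP constraints, and
`g = g(z,ζ;x,y,t)` is a smooth decaying solution of the Gelfand–Levitan–Marchenko
equation and its mirror version with `Q = P`, then `u(x,y,t) := g(0,0;x,y,t)`
satisfies the non-commutative potential KP equation
`D u_y = (1/3)(u_t − u_{xxx}) + 2u_x² + 2∂_x⁻¹[u_y,u_x]` with `D = ∂_x⁻¹∂_y`. -/
theorem direct_linearisation_KP {m : ℕ} (p : Ker4 m)
    (hp : IsScattering4 p) (hlin : LinearisedKP p)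
    (g : ℝ → ℝ → ℝ → ℝ → ℝ → Mat m)
    (hgsmooth : ∀ i j : Fin m, ContDiff ℝ (⊤ : ℕ∞)
      (fun v : ℝ × ℝ × ℝ × ℝ × ℝ => g v.1 v.2.1 v.2.2.1 v.2.2.2.1 v.2.2.2.2 i j))
    (hgdecay : ∀ (a b c d e : ℕ) (x y t : ℝ),
      KernelDecay (fun z ζ => D5 a b c d e g z ζ x y t))
    (hGLM : ∀ (x y t : ℝ), ∀ z ∈ Set.Iic (0:ℝ), ∀ ζ ∈ Set.Iic (0:ℝ),
      p (z + x) (ζ + x) y t = g z ζ x y t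
        - Matrix.of (fun i j =>
            ∫ ξ in Set.Iic (0:ℝ), (g z ξ x y t * p (ξ + x) (ζ + x) y t) i j))
    (hGLMmirror : ∀ (x y t : ℝ), ∀ z ∈ Set.Iic (0:ℝ), ∀ ζ ∈ Set.Iic (0:ℝ),
      p (z + x) (ζ + x) y t = g z ζ x y t
        - Matrix.of (fun i j =>
            ∫ ξ in Set.Iic (0:ℝ), (p (z + x) (ξ + x) y t * g ξ ζ x y t) i j))
    (u : ℝ → ℝ → ℝ → Mat m) (hu : ∀ x y t : ℝ, u x y t = g 0 0 x y t)
    (hudecay : ∀ (c d e : ℕ) (y t : ℝ) (i j : Fin m),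
      Tendsto (fun x => D3 c d e u x y t i j) atBot (nhds 0))
    (huint : ∀ (c d e : ℕ) (y t : ℝ) (i j : Fin m) (a : ℝ),
      IntegrableOn (fun x => D3 c d e u x y t i j) (Set.Iic a)) :
    ∀ x y t : ℝ,
      (Matrix.of (fun i j => ∫ x' in Set.Iic x, D3 0 2 0 u x' y t i j) : Mat m)
      =
      ((1:ℂ)/3) • (D3 0 0 1 u x y t - D3 3 0 0 u x y t)
      + (2:ℕ) • (D3 1 0 0 u x y t * D3 1 0 0 u x y t)
      + (2:ℕ) • (Matrix.of (fun i j => ∫ x' in Set.Iic x,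
          (D3 0 1 0 u x' y t * D3 1 0 0 u x' y t
            - D3 1 0 0 u x' y t * D3 0 1 0 u x' y t) i j) : Mat m) := by
  let k := smoothMapOfEntries (fun w : ℝ × ℝ × ℝ × ℝ => p w.1 w.2.1 w.2.2.1 w.2.2.2) hp.1
  have hk := mem_linearisedKPKernels_of_entries (k := k) hp hlin
  have hg := isGLMSolution_of_entries (k := k) (g := smoothMapOfEntries _ hgsmooth)
    (fun y t => (hp.2 0 0 y t).1) hgdecay hGLM hGLMmirror
  exact potentialKP_of_entries hk hg hu huint

end NCKP
end

section
/- The lifted mKP constraint identity (equation (4.4)). Let p be a scattering function, x ∈ ℝ, and w₊, w₋ resolvent kernels for p. Then for all z, ζ ∈ (-∞,0]: [V](z,0)·{V P_{[1,0]} V†}(0,ζ) − {V P_{[1,0]} V†}(z,0)·[V](0,ζ) = ∂_x[V P_{[1,0]} V†](z,ζ) − [V P_{[2,0]} V](z,ζ), where ∂_x denotes the partial derivative in the parameter x. In word notation: ad_{[V]}{V P_{[1,0]} V†} = ∂_x[V P_{[1,0]} V†] − [V P_{[2,0]} V]. -/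
open MeasureTheory Filter

namespace NCKP

/-- `[V A V†] := [[V A V†]] − [[V† (−A) V]]`. -/
noncomputable def brkVAVd {m : ℕ} (wp wm A : Ker m) : Ker m :=
  vAv wp A wm - vAv wm (-A) wp

/-- `{V A V†} := [[V A V†]] + [[V† (−A) V]]`. -/
noncomputable def symVAVd {m : ℕ} (wp wm A : Ker m) : Ker m :=
  vAv wp A wm + vAv wm (-A) wp

/-- `[V A V] := [[V A V]] − [[V† (−A) V†]]`. -/
noncomputable def brkVAV {m : ℕ} (wp wm A : Ker m) : Ker m :=
  vAv wp A wp - vAv wm (-A) wm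

/-- `{V A V} := [[V A V]] + [[V† (−A) V†]]`. -/
noncomputable def symVAV {m : ℕ} (wp wm A : Ker m) : Ker m :=
  vAv wp A wp + vAv wm (-A) wm

/-- `[V A V† B V] := [[V A V† B V]] − [[V† (−A) V (−B) V†]]`. -/
noncomputable def brkVAVdBV {m : ℕ} (wp wm A B : Ker m) : Ker m :=
  vAvBv wp A wm B wp - vAvBv wm (-A) wp (-B) wm

/-- `{V A V† B V} := [[V A V† B V]] + [[V† (−A) V (−B) V†]]`. -/
noncomputable def symVAVdBV {m : ℕ} (wp wm A B : Ker m) : Ker m :=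
  vAvBv wp A wm B wp + vAvBv wm (-A) wp (-B) wm

/-- `[V A V B V] := [[V A V B V]] − [[V† (−A) V† (−B) V†]]`. -/
noncomputable def brkVAVBV {m : ℕ} (wp wm A B : Ker m) : Ker m :=
  vAvBv wp A wp B wp - vAvBv wm (-A) wm (-B) wm

/-- `[V A V B V†] := [[V A V B V†]] − [[V† (−A) V† (−B) V]]`. -/
noncomputable def brkVAVBVd {m : ℕ} (wp wm A B : Ker m) : Ker m :=
  vAvBv wp A wp B wm - vAvBv wm (-A) wm (-B) wp

/-- `[V A V† B V†] := [[V A V† B V†]] − [[V† (−A) V (−B) V]]`. -/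
noncomputable def brkVAVdBVd {m : ℕ} (wp wm A B : Ker m) : Ker m :=
  vAvBv wp A wm B wm - vAvBv wm (-A) wp (-B) wp

end NCKP

/-!
In the frame in which `p` stands still, the kernel of `V - id` is the resolvent kernel of `p` on the
half-line `(-∞, x]`, and the resolvent identity shows that its derivative in the endpoint `x` is the
rank-one kernel `w(z, x) w(x, ζ)`. In the original frame this reads
`∂ₓw = ∂_z w + ∂_ζ w + w(·, 0) w(0, ·)`.
Differentiating the resolvent equations gives `V ∂_z P = ∂_z V` and the like, so integration by
parts turns every word in the constraint into derivatives of the resolvent kernels `w₊`, `w₋` plus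
products of their boundary values; what remains is an identity in a noncommutative ring.
-/

namespace NCKP

open Set Topology

section PartialDerivatives

variable {E : Type*} [NormedAddCommGroup E] [NormedSpace ℝ E]

/-- The partial derivative `∂_z k` of a kernel `k(z, ζ)`. -/
noncomputable def derivFst (k : ℝ → ℝ → E) : ℝ → ℝ → E :=
  fun z ζ => deriv (fun z' => k z' ζ) z

/-- The partial derivative `∂_ζ k` of a kernel `k(z, ζ)`. -/
noncomputable def derivSnd (k : ℝ → ℝ → E) : ℝ → ℝ → E :=
  fun z ζ => deriv (k z) ζ

/-- The kernel `k` translated along the diagonal, `k(z + x, ζ + x)`. -/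
def shift (x : ℝ) (k : ℝ → ℝ → E) : ℝ → ℝ → E :=
  fun z ζ => k (z + x) (ζ + x)

variable {k : ℝ → ℝ → E}

theorem hasDerivAt_derivFst (hk : Differentiable ℝ (Function.uncurry k)) (z ζ : ℝ) :
    HasDerivAt (fun z' => k z' ζ) (derivFst k z ζ) z :=
  (hk.comp (differentiable_id.prodMk (differentiable_const ζ))).differentiableAt.hasDerivAt

theorem hasDerivAt_derivSnd (hk : Differentiable ℝ (Function.uncurry k)) (z ζ : ℝ) :
    HasDerivAt (k z) (derivSnd k z ζ) ζ :=
  (hk.comp ((differentiable_const z).prodMk differentiable_id)).differentiableAt.hasDerivAt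

theorem uncurry_derivFst (hk : Differentiable ℝ (Function.uncurry k)) :
    Function.uncurry (derivFst k) = fun v => fderiv ℝ (Function.uncurry k) v (1, 0) :=
  funext fun v => ((hk v).hasFDerivAt.comp_hasDerivAt (f := fun z => (z, v.2)) v.1
    ((hasDerivAt_id v.1).prodMk (hasDerivAt_const v.1 v.2))).deriv

theorem uncurry_derivSnd (hk : Differentiable ℝ (Function.uncurry k)) :
    Function.uncurry (derivSnd k) = fun v => fderiv ℝ (Function.uncurry k) v (0, 1) :=
  funext fun v => ((hk v).hasFDerivAt.comp_hasDerivAt (f := fun ζ => (v.1, ζ)) v.2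
    ((hasDerivAt_const v.2 v.1).prodMk (hasDerivAt_id v.2))).deriv

theorem contDiff_derivFst {n : WithTop ℕ∞} (hk : ContDiff ℝ (n + 1) (Function.uncurry k)) :
    ContDiff ℝ n (Function.uncurry (derivFst k)) := by
  rw [uncurry_derivFst (hk.differentiable (by simp))]
  exact (hk.fderiv_right le_rfl).clm_apply contDiff_const

theorem contDiff_derivSnd {n : WithTop ℕ∞} (hk : ContDiff ℝ (n + 1) (Function.uncurry k)) :
    ContDiff ℝ n (Function.uncurry (derivSnd k)) := by
  rw [uncurry_derivSnd (hk.differentiable (by simp))]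
  exact (hk.fderiv_right le_rfl).clm_apply contDiff_const

theorem derivFst_derivSnd_comm (hk : ContDiff ℝ 2 (Function.uncurry k)) :
    derivFst (derivSnd k) = derivSnd (derivFst k) := by
  have hk1 : Differentiable ℝ (Function.uncurry k) := hk.differentiable (by simp)
  have hfderiv : Differentiable ℝ (fderiv ℝ (Function.uncurry k)) :=
    (hk.fderiv_right (m := 1) le_rfl).differentiable one_ne_zero
  have hsecond (u v y : ℝ × ℝ) : fderiv ℝ (fun y => fderiv ℝ (Function.uncurry k) y u) y v =
      fderiv ℝ (fderiv ℝ (Function.uncurry k)) y v u := by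
    simp [fderiv_clm_apply (hfderiv y) (differentiableAt_const u)]
  have hsymm (y : ℝ × ℝ) : IsSymmSndFDerivAt ℝ (Function.uncurry k) y :=
    hk.contDiffAt.isSymmSndFDerivAt (by norm_num)
  refine Function.uncurry_injective (funext fun y => ?_)
  rw [uncurry_derivFst ((contDiff_derivSnd (n := 1) hk).differentiable one_ne_zero),
    uncurry_derivSnd ((contDiff_derivFst (n := 1) hk).differentiable one_ne_zero),
    uncurry_derivFst hk1, uncurry_derivSnd hk1]
  simp only [hsecond]
  exact hsymm y _ _

theorem hasDerivAt_derivSnd_of_hasDerivAt {f : ℝ → E} {f' : E} {z ζ : ℝ}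
    (hk : ContDiff ℝ 2 (Function.uncurry k)) (hf : ∀ ζ', HasDerivAt (fun z' => k z' ζ') (f ζ') z)
    (hf' : HasDerivAt f f' ζ) : HasDerivAt (fun z' => derivSnd k z' ζ) f' z := by
  have hfst : derivFst k z = f := funext fun ζ' => (hf ζ').deriv
  have hmixed : derivFst (derivSnd k) z ζ = f' := by
    rw [derivFst_derivSnd_comm hk, derivSnd, hfst, hf'.deriv]
  exact hmixed ▸ hasDerivAt_derivFst
    ((contDiff_derivSnd (n := 1) hk).differentiable one_ne_zero) z ζ

theorem derivFst_neg (k : ℝ → ℝ → E) : derivFst (-k) = -derivFst k :=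
  funext fun _ => funext fun _ => deriv.neg

theorem derivSnd_neg (k : ℝ → ℝ → E) : derivSnd (-k) = -derivSnd k :=
  funext fun _ => funext fun _ => deriv.neg

theorem derivFst_shift (x : ℝ) (k : ℝ → ℝ → E) : derivFst (shift x k) = shift x (derivFst k) :=
  funext fun z => funext fun ζ => deriv_comp_add_const (fun z' => k z' (ζ + x)) x z

theorem derivSnd_shift (x : ℝ) (k : ℝ → ℝ → E) : derivSnd (shift x k) = shift x (derivSnd k) :=
  funext fun z => funext fun ζ => deriv_comp_add_const (k (z + x)) x ζ

/-- The kernel `∂_z q - ∂_ζ q`, which is `P_{[1,0]}` for `q = shift x p`. -/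
noncomputable def bracketOneZero (q : ℝ → ℝ → E) : ℝ → ℝ → E :=
  derivFst q - derivSnd q

/-- The kernel `∂_z² q - ∂_ζ² q`, which is `P_{[2,0]}` for `q = shift x p`. -/
noncomputable def bracketTwoZero (q : ℝ → ℝ → E) : ℝ → ℝ → E :=
  derivFst (derivFst q) - derivSnd (derivSnd q)

theorem bracketOneZero_neg (q : ℝ → ℝ → E) : bracketOneZero (-q) = -bracketOneZero q := by
  rw [bracketOneZero, bracketOneZero, derivFst_neg, derivSnd_neg]
  abel

theorem bracketTwoZero_neg (q : ℝ → ℝ → E) : bracketTwoZero (-q) = -bracketTwoZero q := by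
  simp only [bracketTwoZero, derivFst_neg, derivSnd_neg]
  abel

end PartialDerivatives

theorem hasDerivAt_of_sub_eq_intervalIntegral {E : Type*} [NormedAddCommGroup E]
    [NormedSpace ℝ E] [CompleteSpace E] {F : ℝ → E} {Φ : ℝ → ℝ → E} {s : ℝ}
    (hΦ : Continuous (Function.uncurry Φ)) (hF : ∀ t, F t - F s = ∫ ξ in s..t, Φ t ξ) :
    HasDerivAt F (Φ s s) s := by
  have hslope : ∀ t ≠ s, ∫ θ in (0 : ℝ)..1, Φ t (s + (t - s) * θ) = slope F s t := fun t ht => by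
    have hts : t - s ≠ 0 := sub_ne_zero.2 ht
    rw [slope_def_module, hF, intervalIntegral.integral_comp_add_mul _ hts]
    simp
  have hmean : Continuous fun t => ∫ θ in (0 : ℝ)..1, Φ t (s + (t - s) * θ) :=
    intervalIntegral.continuous_parametric_intervalIntegral_of_continuous'
      (f := fun t θ => Φ t (s + (t - s) * θ))
      (hΦ.comp (f := fun v : ℝ × ℝ => (v.1, s + (v.1 - s) * v.2))
        (by fun_prop)) 0 1
  exact hasDerivAt_iff_tendsto_slope.2 (((hmean.tendsto' s (Φ s s) (by simp)).mono_left
    nhdsWithin_le_nhds).congr' (eventually_nhdsWithin_of_forall hslope))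

section IntegrableKernels

variable {E : Type*} [NormedAddCommGroup E] {k l : ℝ → ℝ → E}

/-- Continuous bounded kernels that are integrable near `-∞` in each variable, the class in which
kernels are composed. -/
structure IsIntegrableKernel (k : ℝ → ℝ → E) : Prop where
  continuous : Continuous (Function.uncurry k)
  bounded : ∃ C, ∀ z ζ, ‖k z ζ‖ ≤ C
  integrableOn_fst : ∀ ζ s, IntegrableOn (fun z => k z ζ) (Iic s)
  integrableOn_snd : ∀ z s, IntegrableOn (k z) (Iic s)

namespace IsIntegrableKernel

theorem continuous_snd (hk : IsIntegrableKernel k) (z : ℝ) : Continuous (k z) :=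
  hk.continuous.comp (continuous_const.prodMk continuous_id)

theorem neg (hk : IsIntegrableKernel k) : IsIntegrableKernel (-k) where
  continuous := hk.continuous.neg
  bounded := by simpa using hk.bounded
  integrableOn_fst ζ s := (hk.integrableOn_fst ζ s).neg
  integrableOn_snd z s := (hk.integrableOn_snd z s).neg

theorem sub (hk : IsIntegrableKernel k) (hl : IsIntegrableKernel l) :
    IsIntegrableKernel (k - l) where
  continuous := hk.continuous.sub hl.continuous
  bounded := by
    obtain ⟨C, hC⟩ := hk.bounded
    obtain ⟨D, hD⟩ := hl.bounded
    exact ⟨C + D, fun z ζ => norm_sub_le_of_le (hC z ζ) (hD z ζ)⟩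
  integrableOn_fst ζ s := (hk.integrableOn_fst ζ s).sub (hl.integrableOn_fst ζ s)
  integrableOn_snd z s := (hk.integrableOn_snd z s).sub (hl.integrableOn_snd z s)

theorem shift (hk : IsIntegrableKernel k) (x : ℝ) : IsIntegrableKernel (shift x k) := by
  have comp_add {f : ℝ → E} {s : ℝ} (hf : IntegrableOn f (Iic (s + x))) :
      IntegrableOn (fun ξ => f (ξ + x)) (Iic s) := by
    simpa [Function.comp_def] using
      ((measurePreserving_add_right volume x).integrableOn_comp_preimage
        (measurableEmbedding_addRight x)).2 hf
  exact
    { continuous := hk.continuous.comp (f := fun v : ℝ × ℝ => (v.1 + x, v.2 + x)) (by fun_prop)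
      bounded := hk.bounded.imp fun _ hC z ζ => hC (z + x) (ζ + x)
      integrableOn_fst := fun ζ s => comp_add (hk.integrableOn_fst (ζ + x) (s + x))
      integrableOn_snd := fun z s => comp_add (hk.integrableOn_snd (z + x) (s + x)) }

end IsIntegrableKernel

variable [NormedSpace ℝ E]

/-- `C²` kernels that are integrable kernels along with their first and pure second partial
derivatives. -/
structure IsC2IntegrableKernel (k : ℝ → ℝ → E) : Prop where
  contDiff : ContDiff ℝ 2 (Function.uncurry k)
  isIntegrableKernel : IsIntegrableKernel k
  derivFst : IsIntegrableKernel (derivFst k)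
  derivSnd : IsIntegrableKernel (derivSnd k)
  derivFst_derivFst : IsIntegrableKernel (NCKP.derivFst (NCKP.derivFst k))
  derivSnd_derivSnd : IsIntegrableKernel (NCKP.derivSnd (NCKP.derivSnd k))

namespace IsC2IntegrableKernel

theorem differentiable (hk : IsC2IntegrableKernel k) : Differentiable ℝ (Function.uncurry k) :=
  hk.contDiff.differentiable two_ne_zero

theorem differentiable_derivFst (hk : IsC2IntegrableKernel k) :
    Differentiable ℝ (Function.uncurry (NCKP.derivFst k)) :=
  (contDiff_derivFst (n := 1) hk.contDiff).differentiable one_ne_zero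

theorem differentiable_derivSnd (hk : IsC2IntegrableKernel k) :
    Differentiable ℝ (Function.uncurry (NCKP.derivSnd k)) :=
  (contDiff_derivSnd (n := 1) hk.contDiff).differentiable one_ne_zero

theorem neg (hk : IsC2IntegrableKernel k) : IsC2IntegrableKernel (-k) where
  contDiff := hk.contDiff.neg
  isIntegrableKernel := hk.isIntegrableKernel.neg
  derivFst := by simpa only [derivFst_neg] using hk.derivFst.neg
  derivSnd := by simpa only [derivSnd_neg] using hk.derivSnd.neg
  derivFst_derivFst := by simpa only [derivFst_neg] using hk.derivFst_derivFst.neg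
  derivSnd_derivSnd := by simpa only [derivSnd_neg] using hk.derivSnd_derivSnd.neg

theorem shift (hk : IsC2IntegrableKernel k) (x : ℝ) : IsC2IntegrableKernel (shift x k) where
  contDiff := hk.contDiff.comp (f := fun v : ℝ × ℝ => (v.1 + x, v.2 + x)) (by fun_prop)
  isIntegrableKernel := hk.isIntegrableKernel.shift x
  derivFst := by simpa only [derivFst_shift] using hk.derivFst.shift x
  derivSnd := by simpa only [derivSnd_shift] using hk.derivSnd.shift x
  derivFst_derivFst := by simpa only [derivFst_shift] using hk.derivFst_derivFst.shift x
  derivSnd_derivSnd := by simpa only [derivSnd_shift] using hk.derivSnd_derivSnd.shift x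

end IsC2IntegrableKernel

end IntegrableKernels

section KernelComposition

variable {E : Type*} [NormedRing E] {k l n : ℝ → ℝ → E}

theorem integrable_mul_mul_prod {α β : Type*} [MeasurableSpace α] [MeasurableSpace β]
    {μ : Measure α} {ν : Measure β} [SFinite μ] [SFinite ν] {f : α → E} {l : α → β → E}
    {g : β → E} {C : ℝ} (hf : Integrable f μ) (hl : StronglyMeasurable (Function.uncurry l))
    (hC : ∀ x y, ‖l x y‖ ≤ C) (hg : Integrable g ν) :
    Integrable (fun v : α × β => f v.1 * l v.1 v.2 * g v.2) (μ.prod ν) := by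
  refine ((hf.norm.mul_prod hg.norm).const_mul C).mono'
    ((hf.aestronglyMeasurable.comp_fst.mul hl.aestronglyMeasurable).mul
      hg.aestronglyMeasurable.comp_snd) (Eventually.of_forall fun v => ?_)
  calc ‖f v.1 * l v.1 v.2 * g v.2‖ ≤ ‖f v.1‖ * ‖l v.1 v.2‖ * ‖g v.2‖ := norm_mul₃_le
    _ ≤ ‖f v.1‖ * C * ‖g v.2‖ := by gcongr; exact hC _ _
    _ = C * (‖f v.1‖ * ‖g v.2‖) := by ring

theorem IsIntegrableKernel.integrableOn_mul (hk : IsIntegrableKernel k)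
    (hl : IsIntegrableKernel l) (s z ζ : ℝ) : IntegrableOn (fun ξ => k z ξ * l ξ ζ) (Iic s) := by
  obtain ⟨C, hC⟩ := hk.bounded
  exact (hl.integrableOn_fst ζ s).bdd_mul (hk.continuous_snd z).aestronglyMeasurable
    (Eventually.of_forall (hC z))

theorem IsIntegrableKernel.integrable_mul_mul_prod (hk : IsIntegrableKernel k)
    (hl : IsIntegrableKernel l) (hn : IsIntegrableKernel n) (s t z ζ : ℝ) :
    Integrable (fun v : ℝ × ℝ => k z v.1 * l v.1 v.2 * n v.2 ζ)
      ((volume.restrict (Iic s)).prod (volume.restrict (Iic t))) := by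
  obtain ⟨C, hC⟩ := hl.bounded
  exact NCKP.integrable_mul_mul_prod (hk.integrableOn_snd z s) hl.continuous.stronglyMeasurable hC
    (hn.integrableOn_fst ζ t)

variable [NormedAlgebra ℝ E] {s : ℝ}

/-- The composition of kernels over the half-line `(-∞, s]`; the paper's `k ∗ l` is `k ⋆[0] l`. -/
noncomputable def kernelComp (s : ℝ) (k l : ℝ → ℝ → E) : ℝ → ℝ → E :=
  fun z ζ => ∫ ξ in Iic s, k z ξ * l ξ ζ

local notation:70 k:70 "⋆[" s "]" l:71 => kernelComp s k l

theorem neg_kernelComp (s : ℝ) (k l : ℝ → ℝ → E) : -k ⋆[s] l = -(k ⋆[s] l) := by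
  funext z ζ
  simp [kernelComp, integral_neg]

theorem kernelComp_neg (s : ℝ) (k l : ℝ → ℝ → E) : k ⋆[s] -l = -(k ⋆[s] l) := by
  funext z ζ
  simp [kernelComp, integral_neg]

theorem kernelComp_sub (hl : ∀ z ζ, IntegrableOn (fun ξ => k z ξ * l ξ ζ) (Iic s))
    (hn : ∀ z ζ, IntegrableOn (fun ξ => k z ξ * n ξ ζ) (Iic s)) :
    k ⋆[s] (l - n) = k ⋆[s] l - k ⋆[s] n := by
  funext z ζ
  simpa [kernelComp, mul_sub] using integral_sub (hl z ζ) (hn z ζ)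

theorem sub_kernelComp (hk : ∀ z ζ, IntegrableOn (fun ξ => k z ξ * n ξ ζ) (Iic s))
    (hl : ∀ z ζ, IntegrableOn (fun ξ => l z ξ * n ξ ζ) (Iic s)) :
    (k - l) ⋆[s] n = k ⋆[s] n - l ⋆[s] n := by
  funext z ζ
  simpa [kernelComp, sub_mul] using integral_sub (hk z ζ) (hl z ζ)

theorem shift_kernelComp (x s : ℝ) (k l : ℝ → ℝ → E) :
    shift x (k ⋆[s + x] l) = shift x k ⋆[s] shift x l := by
  funext z ζ
  simpa [shift, kernelComp] using
    ((measurePreserving_add_right volume x).setIntegral_preimage_emb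
      (measurableEmbedding_addRight x) (fun ξ => k (z + x) ξ * l ξ (ζ + x)) (Iic (s + x))).symm

namespace IsIntegrableKernel

theorem mul_kernelComp (hl : IsIntegrableKernel l) (hn : IsIntegrableKernel n) (s ξ ζ : ℝ)
    (c : E) : c * (l ⋆[s] n) ξ ζ = ∫ η in Iic s, c * l ξ η * n η ζ := by
  simp only [mul_assoc]
  exact (integral_const_mul_of_integrable (hl.integrableOn_mul hn s ξ ζ)).symm

theorem kernelComp_mul (hk : IsIntegrableKernel k) (hl : IsIntegrableKernel l) (s z η : ℝ)
    (c : E) : (k ⋆[s] l) z η * c = ∫ ξ in Iic s, k z ξ * l ξ η * c :=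
  (integral_mul_const_of_integrable (hk.integrableOn_mul hl s z η)).symm

theorem integrableOn_mul_kernelComp (hk : IsIntegrableKernel k) (hl : IsIntegrableKernel l)
    (hn : IsIntegrableKernel n) (s t z ζ : ℝ) :
    IntegrableOn (fun ξ => k z ξ * (l ⋆[t] n) ξ ζ) (Iic s) := by
  simp only [hl.mul_kernelComp hn]
  exact (hk.integrable_mul_mul_prod hl hn s t z ζ).integral_prod_left

theorem kernelComp_assoc (hk : IsIntegrableKernel k) (hl : IsIntegrableKernel l)
    (hn : IsIntegrableKernel n) (s t : ℝ) : k ⋆[s] (l ⋆[t] n) = (k ⋆[s] l) ⋆[t] n := by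
  funext z ζ
  calc ∫ ξ in Iic s, k z ξ * (l ⋆[t] n) ξ ζ
      = ∫ ξ in Iic s, ∫ η in Iic t, k z ξ * l ξ η * n η ζ := by simp only [hl.mul_kernelComp hn]
    _ = ∫ η in Iic t, ∫ ξ in Iic s, k z ξ * l ξ η * n η ζ :=
        integral_integral_swap (hk.integrable_mul_mul_prod hl hn s t z ζ)
    _ = ∫ η in Iic t, (k ⋆[s] l) z η * n η ζ := by simp only [hk.kernelComp_mul hl]

theorem hasDerivAt_kernelComp_fst (hk : IsIntegrableKernel k)
    (hk' : IsIntegrableKernel (derivFst k)) (hd : Differentiable ℝ (Function.uncurry k))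
    (hl : IsIntegrableKernel l) (s z ζ : ℝ) :
    HasDerivAt (fun z' => (k ⋆[s] l) z' ζ) ((derivFst k ⋆[s] l) z ζ) z := by
  obtain ⟨C, hC⟩ := hk'.bounded
  refine (hasDerivAt_integral_of_dominated_loc_of_deriv_le univ_mem
    (bound := fun ξ => C * ‖l ξ ζ‖) (F' := fun z ξ => derivFst k z ξ * l ξ ζ)
    (Eventually.of_forall fun z' => (hk.integrableOn_mul hl s z' ζ).aestronglyMeasurable)
    (hk.integrableOn_mul hl s z ζ) (hk'.integrableOn_mul hl s z ζ).aestronglyMeasurable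
    (Eventually.of_forall fun ξ z' _ => ?_) ((hl.integrableOn_fst ζ s).norm.const_mul C)
    (Eventually.of_forall fun ξ z' _ => (hasDerivAt_derivFst hd z' ξ).mul_const _)).2
  exact norm_mul_le_of_le (hC z' ξ) le_rfl

theorem hasDerivAt_kernelComp_snd (hk : IsIntegrableKernel k) (hl : IsIntegrableKernel l)
    (hl' : IsIntegrableKernel (derivSnd l)) (hd : Differentiable ℝ (Function.uncurry l))
    (s z ζ : ℝ) : HasDerivAt ((k ⋆[s] l) z) ((k ⋆[s] derivSnd l) z ζ) ζ := by
  obtain ⟨C, hC⟩ := hl'.bounded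
  refine (hasDerivAt_integral_of_dominated_loc_of_deriv_le univ_mem
    (bound := fun ξ => ‖k z ξ‖ * C) (F := fun ζ ξ => k z ξ * l ξ ζ)
    (F' := fun ζ ξ => k z ξ * derivSnd l ξ ζ)
    (Eventually.of_forall fun ζ' => (hk.integrableOn_mul hl s z ζ').aestronglyMeasurable)
    (hk.integrableOn_mul hl s z ζ) (hk.integrableOn_mul hl' s z ζ).aestronglyMeasurable
    (Eventually.of_forall fun ξ ζ' _ => ?_) ((hk.integrableOn_snd z s).norm.mul_const C)
    (Eventually.of_forall fun ξ ζ' _ => (hasDerivAt_derivSnd hd ξ ζ').const_mul _)).2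
  exact norm_mul_le_of_le le_rfl (hC ξ ζ')

theorem derivFst_eq_of_eq_add_kernelComp (hk : IsIntegrableKernel k)
    (hk' : IsIntegrableKernel (derivFst k)) (hd : Differentiable ℝ (Function.uncurry k))
    (hl : IsIntegrableKernel l) (hn : n = k + k ⋆[s] l) :
    derivFst n = derivFst k + derivFst k ⋆[s] l := by
  subst hn
  funext z ζ
  exact ((hasDerivAt_derivFst hd z ζ).add (hk.hasDerivAt_kernelComp_fst hk' hd hl s z ζ)).deriv

theorem derivSnd_eq_of_eq_add_kernelComp (hk : IsIntegrableKernel k) (hl : IsIntegrableKernel l)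
    (hl' : IsIntegrableKernel (derivSnd l)) (hd : Differentiable ℝ (Function.uncurry l))
    (hn : n = l + k ⋆[s] l) : derivSnd n = derivSnd l + k ⋆[s] derivSnd l := by
  subst hn
  funext z ζ
  exact ((hasDerivAt_derivSnd hd z ζ).add (hk.hasDerivAt_kernelComp_snd hl hl' hd s z ζ)).deriv

theorem derivSnd_kernelComp_add_kernelComp_derivFst [CompleteSpace E] (hk : IsIntegrableKernel k)
    (hk' : IsIntegrableKernel (derivSnd k)) (hkd : Differentiable ℝ (Function.uncurry k))
    (hl : IsIntegrableKernel l) (hl' : IsIntegrableKernel (derivFst l))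
    (hld : Differentiable ℝ (Function.uncurry l)) (s z ζ : ℝ) :
    (derivSnd k ⋆[s] l) z ζ + (k ⋆[s] derivFst l) z ζ = k z s * l s ζ := by
  have hderiv (ξ : ℝ) (_ : ξ ∈ Iic s) : HasDerivAt (fun ξ => k z ξ * l ξ ζ)
      (derivSnd k z ξ * l ξ ζ + k z ξ * derivFst l ξ ζ) ξ :=
    (hasDerivAt_derivSnd hkd z ξ).mul (hasDerivAt_derivFst hld ξ ζ)
  have hint := (hk'.integrableOn_mul hl s z ζ).add (hk.integrableOn_mul hl' s z ζ)
  have hzero : Tendsto (fun ξ => k z ξ * l ξ ζ) atBot (𝓝 0) :=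
    tendsto_zero_of_hasDerivAt_of_integrableOn_Iic hderiv hint (hk.integrableOn_mul hl s z ζ)
  simpa [kernelComp] using
    (integral_add (hk'.integrableOn_mul hl s z ζ) (hk.integrableOn_mul hl' s z ζ)).symm.trans
      (integral_Iic_of_hasDerivAt_of_tendsto' hderiv hint hzero)

end IsIntegrableKernel

/-- `a` is the resolvent kernel of `q` on `(-∞, s]`: with respect to composition over this
half-line, `δ + a` is a two-sided inverse of `δ - q`. -/
structure IsResolventKernel (s : ℝ) (q a : ℝ → ℝ → E) : Prop where
  eq_left : a = q + q ⋆[s] a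
  eq_right : a = q + a ⋆[s] q

/-- The kernel of the word `(δ + u) A (δ + v)`. -/
noncomputable def sandwich (s : ℝ) (u A v : ℝ → ℝ → E) : ℝ → ℝ → E :=
  A + A ⋆[s] v + u ⋆[s] (A + A ⋆[s] v)

variable {q a b : ℝ → ℝ → E}

theorem sandwich_sub {u v A A' B B' : ℝ → ℝ → E} (hu : IsIntegrableKernel u)
    (hv : IsIntegrableKernel v) (hA : IsIntegrableKernel A) (hA' : IsIntegrableKernel A')
    (hB : IsIntegrableKernel B) (hB' : IsIntegrableKernel B')
    (hAv : A' = A + A ⋆[s] v) (huB : B' = B + u ⋆[s] B) :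
    sandwich s u (A - B) v = A' + u ⋆[s] A' - (B' + B' ⋆[s] v) := by
  have hright : A - B + (A - B) ⋆[s] v = A' - B - B ⋆[s] v := by
    rw [sub_kernelComp (hA.integrableOn_mul hv s) (hB.integrableOn_mul hv s), hAv]
    abel
  have hleft : u ⋆[s] (A' - B - B ⋆[s] v) = u ⋆[s] A' - u ⋆[s] B - (u ⋆[s] B) ⋆[s] v := by
    rw [kernelComp_sub (hu.integrableOn_mul (hA'.sub hB) s)
      (hu.integrableOn_mul_kernelComp hB hv s s), hu.kernelComp_assoc hB hv,
      kernelComp_sub (hu.integrableOn_mul hA' s) (hu.integrableOn_mul hB s)]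
  have huB' : u ⋆[s] B = B' - B := eq_sub_of_add_eq' huB.symm
  rw [sandwich, hright, hleft, huB',
    sub_kernelComp (hB'.integrableOn_mul hv s) (hB.integrableOn_mul hv s)]
  abel

namespace IsResolventKernel

theorem shift {x : ℝ} (h : IsResolventKernel (s + x) q a) :
    IsResolventKernel s (shift x q) (shift x a) where
  eq_left := (congrArg (NCKP.shift x) h.eq_left).trans
    (congrArg (NCKP.shift x q + ·) (shift_kernelComp x s q a))
  eq_right := (congrArg (NCKP.shift x) h.eq_right).trans
    (congrArg (NCKP.shift x q + ·) (shift_kernelComp x s a q))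

theorem derivFst_eq (h : IsResolventKernel s q a) (hq : IsC2IntegrableKernel q)
    (ha : IsIntegrableKernel a) : derivFst a = derivFst q + derivFst q ⋆[s] a :=
  hq.isIntegrableKernel.derivFst_eq_of_eq_add_kernelComp hq.derivFst hq.differentiable ha
    h.eq_left

theorem derivSnd_eq (h : IsResolventKernel s q a) (hq : IsC2IntegrableKernel q)
    (ha : IsIntegrableKernel a) : derivSnd a = derivSnd q + a ⋆[s] derivSnd q :=
  ha.derivSnd_eq_of_eq_add_kernelComp hq.isIntegrableKernel hq.derivSnd hq.differentiable
    h.eq_right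

theorem derivFst_derivFst_eq (h : IsResolventKernel s q a) (hq : IsC2IntegrableKernel q)
    (ha : IsIntegrableKernel a) :
    derivFst (derivFst a) = derivFst (derivFst q) + derivFst (derivFst q) ⋆[s] a :=
  hq.derivFst.derivFst_eq_of_eq_add_kernelComp hq.derivFst_derivFst hq.differentiable_derivFst ha
    (h.derivFst_eq hq ha)

theorem derivSnd_derivSnd_eq (h : IsResolventKernel s q a) (hq : IsC2IntegrableKernel q)
    (ha : IsIntegrableKernel a) :
    derivSnd (derivSnd a) = derivSnd (derivSnd q) + a ⋆[s] derivSnd (derivSnd q) :=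
  ha.derivSnd_eq_of_eq_add_kernelComp hq.derivSnd hq.derivSnd_derivSnd hq.differentiable_derivSnd
    (h.derivSnd_eq hq ha)

theorem sub_eq_intervalIntegral {t : ℝ} (ha : IsResolventKernel s q a)
    (hb : IsResolventKernel t q b) (hq : IsIntegrableKernel q) (hai : IsIntegrableKernel a)
    (hbi : IsIntegrableKernel b) (z ζ : ℝ) :
    b z ζ - a z ζ = ∫ ξ in s..t, a z ξ * b ξ ζ := by
  have haq : a ⋆[s] q = a - q := eq_sub_of_add_eq' ha.eq_right.symm
  have hqb : q ⋆[t] b = b - q := eq_sub_of_add_eq' hb.eq_left.symm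
  have hassoc : a ⋆[s] b - (a - q) = a ⋆[t] b - (b - q) := by
    have h := hai.kernelComp_assoc hq hbi s t
    rwa [hqb, haq, kernelComp_sub (hai.integrableOn_mul hbi s) (hai.integrableOn_mul hq s),
      sub_kernelComp (hai.integrableOn_mul hbi t) (hq.integrableOn_mul hbi t), haq, hqb] at h
  have hsub : b - a = a ⋆[t] b - a ⋆[s] b := by
    linear_combination (norm := abel) hassoc
  exact (congrFun₂ hsub z ζ).trans (intervalIntegral.integral_Iic_sub_Iic
    (hai.integrableOn_mul hbi s z ζ) (hai.integrableOn_mul hbi t z ζ))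

theorem sandwich_derivFst_sub_derivSnd [CompleteSpace E] (ha : IsResolventKernel s q a)
    (hb : IsResolventKernel s (-q) b) (hq : IsC2IntegrableKernel q)
    (hai : IsC2IntegrableKernel a) (hbi : IsC2IntegrableKernel b) (z ζ : ℝ) :
    sandwich s a (derivFst q - derivSnd q) b z ζ =
      -derivFst b z ζ - derivSnd a z ζ - a z s * b s ζ := by
  have hb' : -derivFst b = derivFst q + derivFst q ⋆[s] b := by
    rw [hb.derivFst_eq hq.neg hbi.isIntegrableKernel, derivFst_neg, neg_kernelComp, ← neg_add,
      neg_neg]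
  have hparts := hai.isIntegrableKernel.derivSnd_kernelComp_add_kernelComp_derivFst hai.derivSnd
    hai.differentiable hbi.isIntegrableKernel hbi.derivFst hbi.differentiable s z ζ
  rw [sandwich_sub hai.isIntegrableKernel hbi.isIntegrableKernel hq.derivFst hbi.derivFst.neg
    hq.derivSnd hai.derivSnd hb' (ha.derivSnd_eq hq hai.isIntegrableKernel), kernelComp_neg,
    ← hparts]
  simp only [Pi.add_apply, Pi.sub_apply, Pi.neg_apply]
  abel

theorem sandwich_derivFst_derivFst_sub_derivSnd_derivSnd [CompleteSpace E]
    (ha : IsResolventKernel s q a) (hq : IsC2IntegrableKernel q)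
    (hai : IsC2IntegrableKernel a) (z ζ : ℝ) :
    sandwich s a (derivFst (derivFst q) - derivSnd (derivSnd q)) a z ζ =
      derivFst (derivFst a) z ζ - derivSnd (derivSnd a) z ζ
        + a z s * derivFst a s ζ - derivSnd a z s * a s ζ := by
  have hparts_fst := hai.isIntegrableKernel.derivSnd_kernelComp_add_kernelComp_derivFst
    hai.derivSnd hai.differentiable hai.derivFst hai.derivFst_derivFst hai.differentiable_derivFst
    s z ζ
  have hparts_snd := hai.derivSnd.derivSnd_kernelComp_add_kernelComp_derivFst
    hai.derivSnd_derivSnd hai.differentiable_derivSnd hai.isIntegrableKernel hai.derivFst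
    hai.differentiable s z ζ
  rw [sandwich_sub hai.isIntegrableKernel hai.isIntegrableKernel hq.derivFst_derivFst
    hai.derivFst_derivFst hq.derivSnd_derivSnd hai.derivSnd_derivSnd
    (ha.derivFst_derivFst_eq hq hai.isIntegrableKernel)
    (ha.derivSnd_derivSnd_eq hq hai.isIntegrableKernel), ← hparts_fst, ← hparts_snd]
  simp only [Pi.add_apply, Pi.sub_apply]
  abel

end IsResolventKernel

/-- Families `w x` of resolvent kernels of the translates `shift x p` on `(-∞, 0]`, the paper's
`w₊`; its `w₋` is such a family for `-p`. -/
structure IsResolventFamily (p : ℝ → ℝ → E) (w : ℝ → ℝ → ℝ → E) : Prop where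
  contDiff : ContDiff ℝ 2 fun v : ℝ × ℝ × ℝ => w v.1 v.2.1 v.2.2
  isC2IntegrableKernel : ∀ x, IsC2IntegrableKernel (w x)
  isResolventKernel : ∀ x, IsResolventKernel 0 (shift x p) (w x)

namespace IsResolventFamily

variable [CompleteSpace E] {p : ℝ → ℝ → E} {w : ℝ → ℝ → ℝ → E}

theorem hasDerivAt_shift_neg (hw : IsResolventFamily p w) (hp : IsIntegrableKernel p)
    (x z ζ : ℝ) :
    HasDerivAt (fun x' => w x' (z - x') (ζ - x')) (w x (z - x) 0 * w x 0 (ζ - x)) x := by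
  have hint (x' : ℝ) : IsIntegrableKernel (shift (-x') (w x')) :=
    (hw.isC2IntegrableKernel x').isIntegrableKernel.shift (-x')
  have hres (x' : ℝ) : IsResolventKernel x' p (shift (-x') (w x')) := by
    have h : IsResolventKernel (x' + -x') (shift x' p) (w x') :=
      (add_neg_cancel x').symm ▸ hw.isResolventKernel x'
    have hback : shift (-x') (shift x' p) = p := by
      funext z ζ
      simp [NCKP.shift]
    exact hback ▸ h.shift
  have hcont : Continuous (Function.uncurry fun t ξ =>
      w x (z - x) (ξ - x) * w t (ξ - t) (ζ - t)) :=
    (hw.contDiff.continuous.comp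
      (f := fun v : ℝ × ℝ => (x, z - x, v.2 - x)) (by fun_prop)).mul
    (hw.contDiff.continuous.comp
      (f := fun v : ℝ × ℝ => (v.1, v.2 - v.1, ζ - v.1)) (by fun_prop))
  simpa using hasDerivAt_of_sub_eq_intervalIntegral (F := fun t => w t (z - t) (ζ - t)) hcont
    fun t => (hres x).sub_eq_intervalIntegral (hres t) hp (hint x) (hint t) z ζ

theorem hasDerivAt (hw : IsResolventFamily p w) (hp : IsIntegrableKernel p) (x z ζ : ℝ) :
    HasDerivAt (fun x' => w x' z ζ)
      (derivFst (w x) z ζ + derivSnd (w x) z ζ + w x z 0 * w x 0 ζ) x := by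
  set W : ℝ × ℝ × ℝ → E := fun v => w v.1 v.2.1 v.2.2
  have hW : HasFDerivAt W (fderiv ℝ W (x, z, ζ)) (x, z, ζ) :=
    (hw.contDiff.differentiable two_ne_zero _).hasFDerivAt
  have hparam : HasDerivAt (fun x' => w x' z ζ) (fderiv ℝ W (x, z, ζ) (1, 0, 0)) x :=
    hW.comp_hasDerivAt (f := fun x' => (x', z, ζ)) x
      ((hasDerivAt_id x).prodMk (hasDerivAt_const x (z, ζ)))
  have hfst : derivFst (w x) z ζ = fderiv ℝ W (x, z, ζ) (0, 1, 0) :=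
    (hW.comp_hasDerivAt (f := fun z' => (x, z', ζ)) z
      ((hasDerivAt_const z x).prodMk ((hasDerivAt_id z).prodMk (hasDerivAt_const z ζ)))).deriv
  have hsnd : derivSnd (w x) z ζ = fderiv ℝ W (x, z, ζ) (0, 0, 1) :=
    (hW.comp_hasDerivAt (f := fun ζ' => (x, z, ζ')) ζ
      ((hasDerivAt_const ζ x).prodMk ((hasDerivAt_const ζ z).prodMk (hasDerivAt_id ζ)))).deriv
  have hframe : fderiv ℝ W (x, z, ζ) (1, -1, -1) = w x z 0 * w x 0 ζ := by
    have hcurve : HasDerivAt (fun x' => (x', z + x - x', ζ + x - x')) ((1, -1, -1) : ℝ × ℝ × ℝ) x :=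
      (hasDerivAt_id x).prodMk
        (((hasDerivAt_id x).const_sub (z + x)).prodMk ((hasDerivAt_id x).const_sub (ζ + x)))
    have hW' : HasFDerivAt W (fderiv ℝ W (x, z, ζ)) (x, z + x - x, ζ + x - x) := by
      simpa using hW
    simpa using (hW'.comp_hasDerivAt x hcurve).unique
      (hw.hasDerivAt_shift_neg hp x (z + x) (ζ + x))
  have hdirection : ((1, 0, 0) : ℝ × ℝ × ℝ) = (0, 1, 0) + (0, 0, 1) + (1, -1, -1) := by simp
  rwa [hdirection, map_add, map_add, ← hfst, ← hsnd, hframe] at hparam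

theorem hasDerivAt_derivFst (hw : IsResolventFamily p w) (hp : IsIntegrableKernel p)
    (x z ζ : ℝ) :
    HasDerivAt (fun x' => derivFst (w x') z ζ)
      (derivFst (derivFst (w x)) z ζ + derivFst (derivSnd (w x)) z ζ
        + derivFst (w x) z 0 * w x 0 ζ) x := by
  have hw' := hw.isC2IntegrableKernel x
  exact hasDerivAt_derivSnd_of_hasDerivAt (k := fun x' z' => w x' z' ζ)
    (hw.contDiff.comp (f := fun v : ℝ × ℝ => (v.1, v.2, ζ)) (by fun_prop))
    (fun z' => hw.hasDerivAt hp x z' ζ)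
    (((NCKP.hasDerivAt_derivFst hw'.differentiable_derivFst z ζ).add
      (NCKP.hasDerivAt_derivFst hw'.differentiable_derivSnd z ζ)).add
        ((NCKP.hasDerivAt_derivFst hw'.differentiable z 0).mul_const _))

theorem hasDerivAt_derivSnd (hw : IsResolventFamily p w) (hp : IsIntegrableKernel p)
    (x z ζ : ℝ) :
    HasDerivAt (fun x' => derivSnd (w x') z ζ)
      (derivSnd (derivFst (w x)) z ζ + derivSnd (derivSnd (w x)) z ζ
        + w x z 0 * derivSnd (w x) 0 ζ) x := by
  have hw' := hw.isC2IntegrableKernel x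
  exact hasDerivAt_derivSnd_of_hasDerivAt (k := fun x' ζ' => w x' z ζ')
    (hw.contDiff.comp (f := fun v : ℝ × ℝ => (v.1, z, v.2)) (by fun_prop))
    (fun ζ' => hw.hasDerivAt hp x z ζ')
    (((NCKP.hasDerivAt_derivSnd hw'.differentiable_derivFst z ζ).add
      (NCKP.hasDerivAt_derivSnd hw'.differentiable_derivSnd z ζ)).add
        ((NCKP.hasDerivAt_derivSnd hw'.differentiable 0 ζ).const_mul _))

theorem hasDerivAt_bracketOneZero (hw : IsResolventFamily p w) (hp : IsIntegrableKernel p)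
    (x z ζ : ℝ) :
    HasDerivAt (fun x' => bracketOneZero (w x') z ζ)
      (bracketTwoZero (w x) z ζ + derivFst (w x) z 0 * w x 0 ζ
        - w x z 0 * derivSnd (w x) 0 ζ) x := by
  refine ((hw.hasDerivAt_derivFst hp x z ζ).sub (hw.hasDerivAt_derivSnd hp x z ζ)).congr_deriv ?_
  rw [derivFst_derivSnd_comm (hw.isC2IntegrableKernel x).contDiff]
  simp only [bracketTwoZero, Pi.sub_apply]
  abel

theorem sandwich_bracketOneZero {wp wm : ℝ → ℝ → ℝ → E} (hwp : IsResolventFamily p wp)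
    (hwm : IsResolventFamily (-p) wm) (hp : IsC2IntegrableKernel p) (x z ζ : ℝ) :
    sandwich 0 (wp x) (bracketOneZero (shift x p)) (wm x) z ζ =
      -derivFst (wm x) z ζ - derivSnd (wp x) z ζ - wp x z 0 * wm x 0 ζ :=
  (hwp.isResolventKernel x).sandwich_derivFst_sub_derivSnd (hwm.isResolventKernel x) (hp.shift x)
    (hwp.isC2IntegrableKernel x) (hwm.isC2IntegrableKernel x) z ζ

theorem sandwich_bracketTwoZero (hw : IsResolventFamily p w) (hp : IsC2IntegrableKernel p)
    (x z ζ : ℝ) :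
    sandwich 0 (w x) (bracketTwoZero (shift x p)) (w x) z ζ =
      bracketTwoZero (w x) z ζ + w x z 0 * derivFst (w x) 0 ζ - derivSnd (w x) z 0 * w x 0 ζ :=
  (hw.isResolventKernel x).sandwich_derivFst_derivFst_sub_derivSnd_derivSnd (hp.shift x)
    (hw.isC2IntegrableKernel x) z ζ

end IsResolventFamily

end KernelComposition

theorem lifted_mKP_constraint_general {E : Type*} [NormedRing E] [NormedAlgebra ℝ E]
    [CompleteSpace E] {p : ℝ → ℝ → E} {wp wm : ℝ → ℝ → ℝ → E} (hp : IsC2IntegrableKernel p)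
    (hwp : IsResolventFamily p wp) (hwm : IsResolventFamily (-p) wm) (x z ζ : ℝ) :
    HasDerivAt
      (fun x' => (sandwich 0 (wp x') (bracketOneZero (shift x' p)) (wm x')
        - sandwich 0 (wm x') (-bracketOneZero (shift x' p)) (wp x')) z ζ)
      ((wp x - wm x) z 0 * (sandwich 0 (wp x) (bracketOneZero (shift x p)) (wm x)
            + sandwich 0 (wm x) (-bracketOneZero (shift x p)) (wp x)) 0 ζ
        - (sandwich 0 (wp x) (bracketOneZero (shift x p)) (wm x)
            + sandwich 0 (wm x) (-bracketOneZero (shift x p)) (wp x)) z 0 * (wp x - wm x) 0 ζ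
        + (sandwich 0 (wp x) (bracketTwoZero (shift x p)) (wp x)
            - sandwich 0 (wm x) (-bracketTwoZero (shift x p)) (wm x)) z ζ) x := by
  have hwp' : IsResolventFamily (- -p) wp := (neg_neg p).symm ▸ hwp
  have hshift (x' : ℝ) : -shift x' p = shift x' (-p) := rfl
  have hi := hp.isIntegrableKernel
  have hodd (x' : ℝ) : (sandwich 0 (wp x') (bracketOneZero (shift x' p)) (wm x')
      - sandwich 0 (wm x') (-bracketOneZero (shift x' p)) (wp x')) z ζ =
      bracketOneZero (wp x') z ζ - bracketOneZero (wm x') z ζ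
        - wp x' z 0 * wm x' 0 ζ + wm x' z 0 * wp x' 0 ζ := by
    rw [Pi.sub_apply, Pi.sub_apply, ← bracketOneZero_neg, hshift,
      hwp.sandwich_bracketOneZero hwm hp, hwm.sandwich_bracketOneZero hwp' hp.neg]
    simp only [bracketOneZero, Pi.sub_apply]
    abel
  simp only [hodd]
  refine HasDerivAt.congr_deriv ((((hwp.hasDerivAt_bracketOneZero hi x z ζ).sub
    (hwm.hasDerivAt_bracketOneZero hi.neg x z ζ)).sub
    ((hwp.hasDerivAt hi x z 0).mul (hwm.hasDerivAt hi.neg x 0 ζ))).add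
    ((hwm.hasDerivAt hi.neg x z 0).mul (hwp.hasDerivAt hi x 0 ζ))) ?_
  simp only [Pi.add_apply, Pi.sub_apply, ← bracketOneZero_neg, ← bracketTwoZero_neg, hshift,
    hwp.sandwich_bracketOneZero hwm hp, hwm.sandwich_bracketOneZero hwp' hp.neg,
    hwp.sandwich_bracketTwoZero hp, hwm.sandwich_bracketTwoZero hp.neg]
  noncomm_ring

section MatrixKernels

open scoped Matrix.Norms.L2Operator

variable {m : ℕ}

theorem contDiff_matrix {F : Type*} [NormedAddCommGroup F] [NormedSpace ℝ F] {n : WithTop ℕ∞}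
    {f : F → Mat m} (hf : ∀ i j, ContDiff ℝ n fun v => f v i j) : ContDiff ℝ n f :=
  (Matrix.ofLinearEquiv ℝ : (Fin m → Fin m → ℂ) ≃ₗ[ℝ] Mat m).toContinuousLinearEquiv.contDiff.comp
    (contDiff_pi.2 fun i => contDiff_pi.2 (hf i))

theorem integrable_matrix {α : Type*} [MeasurableSpace α] {μ : Measure α} {f : α → Mat m}
    (hf : ∀ i j, Integrable (fun v => f v i j) μ) : Integrable f μ :=
  (Matrix.ofLinearEquiv ℝ : (Fin m → Fin m → ℂ) ≃ₗ[ℝ] Mat m).toContinuousLinearEquiv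
    |>.integrable_comp_iff.2 (.of_eval fun i => .of_eval (hf i))

theorem norm_matrix_le {A : Mat m} {C : ℝ} (hA : ∀ i j, ‖A i j‖ ≤ C) :
    ‖A‖ ≤ ∑ i : Fin m, ∑ j : Fin m, C * ‖Matrix.single i j (1 : ℂ)‖ := by
  rw [Matrix.matrix_eq_sum_single A]
  refine norm_sum_le_of_le _ fun i _ => norm_sum_le_of_le _ fun j _ => ?_
  rw [← mul_one (A i j), ← smul_eq_mul, ← Matrix.smul_single, norm_smul]
  gcongr
  exact hA i j

/-- The entry `(i, j)` of a matrix as a continuous linear map. -/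
noncomputable def entryCLM (i j : Fin m) : Mat m →L[ℝ] ℂ :=
  (Matrix.entryLinearMap ℝ ℂ i j).toContinuousLinearMap

theorem hasDerivAt_matrix_apply {f : ℝ → Mat m} {f' : Mat m} {x : ℝ} (hf : HasDerivAt f f' x)
    (i j : Fin m) : HasDerivAt (fun y => f y i j) (f' i j) x :=
  (entryCLM i j).hasFDerivAt.comp_hasDerivAt x hf

theorem dxK_eq_of_hasDerivAt {K : ℝ → Ker m} {x z ζ : ℝ} {K' : Mat m}
    (hK : HasDerivAt (fun x' => K x' z ζ) K' x) : dxK K x z ζ = K' :=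
  Matrix.ext fun i j => (hasDerivAt_matrix_apply hK i j).deriv

theorem xder_zero (w : ℝ → Ker m) : xder 0 w = w := by
  ext x z ζ i j
  simp [xder]

section PartialDerivatives

variable {k : Ker m}

theorem pder_zero_zero (k : Ker m) : pder 0 0 k = k := by
  ext z ζ i j
  simp [pder]

theorem pder_one_zero (hk : Differentiable ℝ (Function.uncurry k)) :
    pder 1 0 k = derivFst k := by
  ext z ζ i j
  simpa [pder] using (hasDerivAt_matrix_apply (hasDerivAt_derivFst hk z ζ) i j).deriv

theorem pder_zero_one (hk : Differentiable ℝ (Function.uncurry k)) :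
    pder 0 1 k = derivSnd k := by
  ext z ζ i j
  simpa [pder] using (hasDerivAt_matrix_apply (hasDerivAt_derivSnd hk z ζ) i j).deriv

theorem pder_two_zero (hk : ContDiff ℝ 2 (Function.uncurry k)) :
    pder 2 0 k = derivFst (derivFst k) := by
  rw [← pder_one_zero ((contDiff_derivFst (n := 1) hk).differentiable one_ne_zero),
    ← pder_one_zero (hk.differentiable two_ne_zero)]
  ext z ζ i j
  simp [pder, iteratedDeriv_succ]

theorem pder_zero_two (hk : ContDiff ℝ 2 (Function.uncurry k)) :
    pder 0 2 k = derivSnd (derivSnd k) := by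
  rw [← pder_zero_one ((contDiff_derivSnd (n := 1) hk).differentiable one_ne_zero),
    ← pder_zero_one (hk.differentiable two_ne_zero)]
  ext z ζ i j
  simp [pder, iteratedDeriv_succ]

end PartialDerivatives

section Integrability

variable {k : Ker m}

theorem KernelDecay.isIntegrableKernel (hd : KernelDecay k)
    (hk : Continuous (Function.uncurry k)) : IsIntegrableKernel k := by
  obtain ⟨⟨C, hC⟩, hfst, hsnd, -⟩ := hd
  have extend {f : ℝ → Mat m} (hf : Continuous f) (h : IntegrableOn f (Iic 0)) (s : ℝ) :
      IntegrableOn f (Iic s) :=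
    (h.union hf.integrableOn_Icc).mono_set (Iic_subset_Iic_union_Icc (a := 0))
  exact
    { continuous := hk
      bounded := ⟨_, fun z ζ => norm_matrix_le (hC z ζ)⟩
      integrableOn_fst := fun ζ => extend (hk.comp (continuous_id.prodMk continuous_const))
        (integrable_matrix (hfst ζ))
      integrableOn_snd := fun z => extend (hk.comp (continuous_const.prodMk continuous_id))
        (integrable_matrix (hsnd z)) }

theorem isC2IntegrableKernel_of_kernelDecay (hk : ContDiff ℝ 2 (Function.uncurry k))
    (hd : ∀ a b, KernelDecay (pder a b k)) : IsC2IntegrableKernel k where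
  contDiff := hk
  isIntegrableKernel := (pder_zero_zero k ▸ hd 0 0).isIntegrableKernel hk.continuous
  derivFst := (pder_one_zero (hk.differentiable two_ne_zero) ▸ hd 1 0).isIntegrableKernel
    (contDiff_derivFst (n := 1) hk).continuous
  derivSnd := (pder_zero_one (hk.differentiable two_ne_zero) ▸ hd 0 1).isIntegrableKernel
    (contDiff_derivSnd (n := 1) hk).continuous
  derivFst_derivFst := (pder_two_zero hk ▸ hd 2 0).isIntegrableKernel
    (contDiff_derivFst (n := 0) (contDiff_derivFst (n := 1) hk)).continuous
  derivSnd_derivSnd := (pder_zero_two hk ▸ hd 0 2).isIntegrableKernel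
    (contDiff_derivSnd (n := 0) (contDiff_derivSnd (n := 1) hk)).continuous

theorem IsScattering.isC2IntegrableKernel (hk : IsScattering k) : IsC2IntegrableKernel k :=
  isC2IntegrableKernel_of_kernelDecay
    (contDiff_matrix (f := Function.uncurry k) fun i j => contDiff_infty.1 (hk.1 i j) 2) hk.2

end Integrability

section Words

variable {k l u v A : Ker m}

theorem neg_conv (k l : Ker m) : conv (-k) l = -conv k l := by
  ext z ζ i j
  simp [conv, integral_neg]

theorem conv_neg (k l : Ker m) : conv k (-l) = -conv k l := by
  ext z ζ i j
  simp [conv, integral_neg]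

theorem conv_eq_kernelComp (h : ∀ z ζ, IntegrableOn (fun ξ => k z ξ * l ξ ζ) (Iic 0)) :
    conv k l = kernelComp 0 k l := by
  ext z ζ i j
  exact (entryCLM i j).integral_comp_comm (h z ζ)

theorem vAv_eq_sandwich (hu : IsIntegrableKernel u) (hA : IsIntegrableKernel A)
    (hv : IsIntegrableKernel v) : vAv u A v = sandwich 0 u A v := by
  have hAv : conv A v = kernelComp 0 A v := conv_eq_kernelComp (hA.integrableOn_mul hv 0)
  have huAv : conv u (A + kernelComp 0 A v) = kernelComp 0 u (A + kernelComp 0 A v) :=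
    conv_eq_kernelComp fun z ζ => by
      simp only [Pi.add_apply, mul_add]
      exact (hu.integrableOn_mul hA 0 z ζ).add
        (hu.integrableOn_mul_kernelComp hA hv 0 0 z ζ)
  rw [vAv, vA, aV, hAv, huAv, sandwich]

end Words

theorem pSh_zero_zero (p : Ker m) (x : ℝ) : pSh p x 0 0 = shift x p := by
  unfold pSh
  rw [pder_zero_zero]
  rfl

theorem pBr_one_zero {p : Ker m} (hp : Differentiable ℝ (Function.uncurry p)) (x : ℝ) :
    pBr p x 1 0 = bracketOneZero (shift x p) := by
  unfold pBr pSh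
  rw [pder_one_zero hp, pder_zero_one hp, bracketOneZero, derivFst_shift, derivSnd_shift]
  rfl

theorem pBr_two_zero {p : Ker m} (hp : ContDiff ℝ 2 (Function.uncurry p)) (x : ℝ) :
    pBr p x 2 0 = bracketTwoZero (shift x p) := by
  unfold pBr pSh
  rw [pder_two_zero hp, pder_zero_two hp, bracketTwoZero]
  simp only [derivFst_shift, derivSnd_shift]
  rfl

section ResolventFamilies

variable {p : Ker m} {w : ℝ → Ker m}

theorem isC2IntegrableKernel_of_forall_kernelDecay
    (hw : ContDiff ℝ 2 fun v : ℝ × ℝ × ℝ => w v.1 v.2.1 v.2.2)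
    (hd : ∀ n a b x, KernelDecay (pder a b (xder n w x))) (x : ℝ) :
    IsC2IntegrableKernel (w x) :=
  isC2IntegrableKernel_of_kernelDecay
    (hw.comp (f := fun v : ℝ × ℝ => (x, v.1, v.2)) (by fun_prop))
    fun a b => by simpa only [xder_zero] using hd 0 a b x

theorem IsResolventPlus.isResolventFamily (hw : IsResolventPlus p w) (hp : IsIntegrableKernel p) :
    IsResolventFamily p w := by
  obtain ⟨hsmooth, hdecay, hleft, hright⟩ := hw
  have hcontDiff : ContDiff ℝ 2 fun v : ℝ × ℝ × ℝ => w v.1 v.2.1 v.2.2 :=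
    contDiff_matrix fun i j => contDiff_infty.1 (hsmooth i j) 2
  have hC2 := isC2IntegrableKernel_of_forall_kernelDecay hcontDiff hdecay
  refine ⟨hcontDiff, hC2, fun x => ?_⟩
  have hwx := (hC2 x).isIntegrableKernel
  constructor
  · rw [← conv_eq_kernelComp ((hp.shift x).integrableOn_mul hwx 0), ← pSh_zero_zero]
    exact hleft x
  · rw [← conv_eq_kernelComp (hwx.integrableOn_mul (hp.shift x) 0), ← pSh_zero_zero]
    exact hright x

theorem IsResolventMinus.isResolventPlus_neg (hw : IsResolventMinus p w) :
    IsResolventPlus (-p) w := by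
  obtain ⟨hsmooth, hdecay, hleft, hright⟩ := hw
  have hneg (x : ℝ) : pSh (-p) x 0 0 = -pSh p x 0 0 := by
    simp only [pSh_zero_zero]
    rfl
  refine ⟨hsmooth, hdecay, fun x => ?_, fun x => ?_⟩
  · rw [hneg, neg_conv, ← sub_eq_add_neg]
    exact hleft x
  · rw [hneg, conv_neg, ← sub_eq_add_neg]
    exact hright x

end ResolventFamilies

theorem hasDerivAt_brkVAVd {p : Ker m} {wp wm : ℝ → Ker m} (hp : IsScattering p)
    (hwp : IsResolventPlus p wp) (hwm : IsResolventMinus p wm) (x z ζ : ℝ) :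
    HasDerivAt (fun x' => brkVAVd (wp x') (wm x') (pBr p x' 1 0) z ζ)
      ((wp x - wm x) z 0 * symVAVd (wp x) (wm x) (pBr p x 1 0) 0 ζ
        - symVAVd (wp x) (wm x) (pBr p x 1 0) z 0 * (wp x - wm x) 0 ζ
        + brkVAV (wp x) (wm x) (pBr p x 2 0) z ζ) x := by
  have hC2 := hp.isC2IntegrableKernel
  have hP := hwp.isResolventFamily hC2.isIntegrableKernel
  have hM := hwm.isResolventPlus_neg.isResolventFamily hC2.isIntegrableKernel.neg
  have hPi (x' : ℝ) := (hP.isC2IntegrableKernel x').isIntegrableKernel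
  have hMi (x' : ℝ) := (hM.isC2IntegrableKernel x').isIntegrableKernel
  have hone (x' : ℝ) : IsIntegrableKernel (bracketOneZero (shift x' p)) :=
    (hC2.shift x').derivFst.sub (hC2.shift x').derivSnd
  have htwo : IsIntegrableKernel (bracketTwoZero (shift x p)) :=
    (hC2.shift x).derivFst_derivFst.sub (hC2.shift x).derivSnd_derivSnd
  simp only [brkVAVd, symVAVd, brkVAV, pBr_one_zero hC2.differentiable, pBr_two_zero hC2.contDiff,
    vAv_eq_sandwich, hPi, hMi, hone, htwo, (hone _).neg, htwo.neg]
  exact lifted_mKP_constraint_general hC2 hP hM x z ζ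

end MatrixKernels

/-- **The lifted mKP constraint identity (equation (4.4)):**
`ad_{[V]}{V P_{[1,0]} V†} = ∂_x[V P_{[1,0]} V†] − [V P_{[2,0]} V]`
for a scattering function `p` and resolvent kernels `w₊`, `w₋` for `p`. -/
theorem lifted_mKP_constraint {m : ℕ} (p : Ker m) (hp : IsScattering p)
    (wp wm : ℝ → Ker m) (hwp : IsResolventPlus p wp) (hwm : IsResolventMinus p wm)
    (x : ℝ) :
    ∀ z ∈ Set.Iic (0:ℝ), ∀ ζ ∈ Set.Iic (0:ℝ),
      ((wp x - wm x) z 0) * (symVAVd (wp x) (wm x) (pBr p x 1 0) 0 ζ)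
        - (symVAVd (wp x) (wm x) (pBr p x 1 0) z 0) * ((wp x - wm x) 0 ζ)
      =
      dxK (fun x' => brkVAVd (wp x') (wm x') (pBr p x' 1 0)) x z ζ
      - brkVAV (wp x) (wm x) (pBr p x 2 0) z ζ := by
  intro z _ ζ _
  rw [dxK_eq_of_hasDerivAt (hasDerivAt_brkVAVd hp hwp hwm x z ζ)]
  abel

end NCKP
end
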